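/- For every integer d ≥ 2, the genus 0 Hurwitz numbers satisfy the recursion H_{0,d} = ((2d−3)/d) · ∑_{i=1}^{d−1} binom(2d−4, 2i−2) · i² · (d−i)² · H_{0,i} · H_{0,d−i} in ℚ. -/

import Mathlib

/-- The number of `r`-tuples `(τ₁, …, τ_r)` of transpositions in the symmetric group on
`d` letters whose product `τ₁ ⬝ τ₂ ⋯ τ_r` is the identity and which generate a subgroup
acting transitively on the `d` letters. -/
noncomputable def hurwitzTupleCount (d r : ℕ) : ℕ :=
  Nat.card {τ : Fin r → Equiv.Perm (Fin d) //
    (∀ i, (τ i).IsSwap) ∧ (List.ofFn τ).prod = 1 ∧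
    ∀ x y : Fin d, ∃ σ ∈ Subgroup.closure (Set.range τ), σ x = y}

/-- The Hurwitz number `H_{g,d}`: `1/d!` times the number of `(2g - 2 + 2d)`-tuples of
transpositions in `S_d` with product the identity, generating a transitive subgroup. -/
noncomputable def hurwitzNumber (g d : ℕ) : ℚ :=
  (hurwitzTupleCount d (2 * g + 2 * d - 2) : ℚ) / (Nat.factorial d : ℚ)

section
open Finset Matrix

theorem der_prod {R S ι : Type*} [CommRing R] [CommRing S] [Algebra R S] [DecidableEq ι]
    (D : Derivation R S S) (s : Finset ι) (f : ι → S) :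
    D (∏ i ∈ s, f i) = ∑ i ∈ s, (∏ j ∈ s.erase i, f j) * D (f i) := by
  induction s using Finset.induction_on with
  | empty => simp
  | insert a s ha ih =>
    rw [prod_insert ha, D.leibniz, ih, sum_insert ha, erase_insert ha, smul_eq_mul, smul_eq_mul,
      mul_sum, add_comm]
    congr 1
    refine sum_congr rfl fun i hi => ?_
    have : a ≠ i := fun h => ha (h ▸ hi)
    rw [erase_insert_of_ne this, prod_insert (fun h => ha (mem_of_mem_erase h))]
    ring

theorem der_det_row {R S ι : Type*} [CommRing R] [CommRing S] [Algebra R S] [DecidableEq ι]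
    [Fintype ι] (D : Derivation R S S) (M : Matrix ι ι S) :
    D M.det = ∑ i, (M.updateRow i (fun j => D (M i j))).det := by
  have h1 : ∀ i, (M.updateRow i (fun j => D (M i j))).det
      = ∑ σ : Equiv.Perm ι, (Equiv.Perm.sign σ : ℤ) • ((∏ j ∈ univ.erase i, M j (σ j)) * D (M i (σ i))) := by
    intro i
    rw [← det_transpose, det_apply]
    refine sum_congr rfl fun σ _ => ?_
    rw [← mul_prod_erase univ _ (mem_univ i)]
    simp only [transpose_apply, updateRow_self]
    rw [mul_comm]
    rw [Units.smul_def]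
    congr 2
    refine prod_congr rfl fun j hj => ?_
    rw [updateRow_ne (ne_of_mem_erase hj)]
  simp_rw [h1]
  rw [sum_comm, ← det_transpose, det_apply, map_sum]
  refine sum_congr rfl fun σ _ => ?_
  rw [Units.smul_def, map_zsmul, der_prod, smul_sum]
  rfl

section
variable {S : Type*} [CommRing S]

/-- bordered Hankel determinant -/
def bh (h : ℕ → S) (n a b : ℕ) : S :=
  (Matrix.of fun i j : Fin n ⊕ Unit => h (Sum.elim (fun k : Fin n => (k : ℕ)) (fun _ => a) i
    + Sum.elim (fun k : Fin n => (k : ℕ)) (fun _ => b) j)).det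

theorem bh_symm (h : ℕ → S) (n a b : ℕ) : bh h n a b = bh h n b a := by
  unfold bh
  rw [← det_transpose]
  congr 1
  ext i j
  simp [add_comm]

/-- Hankel determinant -/
def hk (h : ℕ → S) (n : ℕ) : S := (Matrix.of fun i j : Fin n => h (i + j)).det

theorem hk_succ (h : ℕ → S) (n : ℕ) : hk h (n+1) = bh h n n n := by
  unfold hk bh
  let e : Fin n ⊕ Unit ≃ Fin (n+1) := (Equiv.sumCongr (Equiv.refl _) (Equiv.equivPUnit (Fin 1)).symm).trans finSumFinEquiv
  rw [← det_submatrix_equiv_self e]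
  congr 1
  ext i j
  rcases i with i | i <;> rcases j with j | j <;> simp [e]

theorem der_bh {R : Type*} [CommRing R] [Algebra R S] (D : Derivation R S S) (h : ℕ → S)
    (hD : ∀ n, D (h n) = h (n+1)) (n b : ℕ) : D (bh h n n b) = bh h n (n+1) b := by
  unfold bh
  rw [der_det_row, Fintype.sum_sum_type]
  rw [sum_eq_zero, zero_add]
  · simp only [univ_unique, sum_singleton]
    congr 1
    ext i j
    rcases i with i | i
    · simp [updateRow_apply]
    · simp only [of_apply, hD, updateRow_apply]
      simp
      congr 1; ring
  · intro k _
    by_cases hk : (k:ℕ) + 1 < n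
    · refine det_zero_of_row_eq (i := Sum.inl k) (j := Sum.inl ⟨k+1, hk⟩) (by simp [Fin.ext_iff]) ?_
      ext j
      simp only [of_apply, hD, updateRow_apply]
      simp [Fin.ext_iff]
      congr 1; ring
    · have : (k:ℕ) + 1 = n := by omega
      refine det_zero_of_row_eq (i := Sum.inl k) (j := Sum.inr ()) (by simp) ?_
      ext j
      simp only [of_apply, hD, updateRow_apply]
      simp [← this]
      congr 1; ring

theorem dodgson_field {K : Type*} [Field K] (h : ℕ → K) (n : ℕ) (h0 : hk h n ≠ 0) :
    hk h (n+2) * hk h n = bh h n n n * bh h n (n+1) (n+1) - bh h n (n+1) n * bh h n n (n+1) := by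
  let A : Matrix (Fin n) (Fin n) K := Matrix.of fun i j : Fin n => h (i + j)
  have hA : A.det = hk h n := rfl
  have : Invertible A := by
    refine A.invertibleOfIsUnitDet ?_
    rw [hA]; exact h0.isUnit
  let s : ℕ → ℕ → K := fun a b => h (a + b) - ∑ x : Fin n, (∑ y : Fin n, h (a + y) * ⅟A y x) * h (x + b)
  have hb : ∀ a b, bh h n a b = hk h n * s a b := by
    intro a b
    have : bh h n a b = (fromBlocks A (Matrix.of fun (i : Fin n) (_ : Unit) => h (i + b))
      (Matrix.of fun (_ : Unit) (i : Fin n) => h (a + i)) (Matrix.of fun _ _ => h (a+b))).det := by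
      unfold bh
      congr 1
      ext i j
      rcases i with i | i <;> rcases j with j | j <;> simp [A]
    rw [this, det_fromBlocks₁₁, hA, det_unique]
    simp [s, Matrix.mul_apply]
  have h2 : hk h (n+2) = hk h n * (s n n * s (n+1) (n+1) - s n (n+1) * s (n+1) n) := by
    have : hk h (n+2) = (fromBlocks A (Matrix.of fun (i : Fin n) (j : Fin 2) => h (i + (n + j)))
      (Matrix.of fun (i : Fin 2) (j : Fin n) => h (n + i + j)) (Matrix.of fun i j => h (n + i + (n + j)))).det := by
      unfold hk
      rw [← det_submatrix_equiv_self finSumFinEquiv]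
      congr 1
      ext i j
      rcases i with i | i <;> rcases j with j | j <;> simp [A]
    rw [this, det_fromBlocks₁₁, hA, det_fin_two]
    simp [s, Matrix.mul_apply]
  rw [h2, hb, hb, hb, hb]
  ring

theorem dodgson_hankel [IsDomain S] (h : ℕ → S) (n : ℕ) (h0 : hk h n ≠ 0) :
    hk h (n+2) * hk h n = bh h n n n * bh h n (n+1) (n+1) - bh h n (n+1) n * bh h n n (n+1) := by
  let f : S →+* FractionRing S := algebraMap S (FractionRing S)
  have hf : Function.Injective f := IsFractionRing.injective S (FractionRing S)
  have e1 : ∀ m, f (hk h m) = hk (fun k => f (h k)) m := by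
    intro m; unfold hk; rw [RingHom.map_det]; rfl
  have e2 : ∀ a b, f (bh h n a b) = bh (fun k => f (h k)) n a b := by
    intro a b; unfold bh; rw [RingHom.map_det]; rfl
  apply hf
  simp only [map_mul, map_sub, e1, e2]
  apply dodgson_field
  rw [← e1]
  exact (map_ne_zero_iff f hf).2 h0

theorem toda_hankel [IsDomain S] {R : Type*} [CommRing R] [Algebra R S] (D : Derivation R S S)
    (h : ℕ → S) (hD : ∀ n, D (h n) = h (n+1)) (n : ℕ) (h0 : hk h n ≠ 0) :
    hk h (n+2) * hk h n = hk h (n+1) * D (D (hk h (n+1))) - D (hk h (n+1)) ^ 2 := by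
  rw [dodgson_hankel h n h0, hk_succ, der_bh D h hD, bh_symm h n (n+1) n, der_bh D h hD]
  ring
end
end

section
open Finset
open scoped PowerSeries

/-- `exp (c u)` -/
noncomputable def Ex (c : ℚ) : ℚ⟦X⟧ := PowerSeries.rescale c (PowerSeries.exp ℚ)

theorem Ex_add (a b : ℚ) : Ex (a + b) = Ex a * Ex b :=
  (PowerSeries.exp_mul_exp_eq_exp_add a b).symm

theorem Ex_zero : Ex 0 = 1 := by
  simp [Ex]

theorem coeff_Ex (c : ℚ) (n : ℕ) : PowerSeries.coeff n (Ex c) = c ^ n / n.factorial := by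
  simp [Ex, PowerSeries.coeff_rescale, PowerSeries.coeff_exp]
  ring

theorem Ex_pow (c : ℚ) (n : ℕ) : Ex c ^ n = Ex (n * c) := by
  induction n with
  | zero => simp [Ex_zero]
  | succ n ih => rw [pow_succ, ih, ← Ex_add]; congr 1; push_cast; ring

/-- `q d/dq` -/
noncomputable def theta (R : Type*) [CommRing R] : Derivation R R⟦X⟧ R⟦X⟧ :=
  (PowerSeries.X : R⟦X⟧) • PowerSeries.derivative R

theorem coeff_theta {R : Type*} [CommRing R] (f : R⟦X⟧) (n : ℕ) :
    PowerSeries.coeff n (theta R f) = n * PowerSeries.coeff n f := by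
  cases n with
  | zero => simp [theta]
  | succ n =>
    simp only [theta, Derivation.smul_apply, smul_eq_mul, PowerSeries.coeff_succ_X_mul,
      PowerSeries.coeff_derivative]
    push_cast; ring

theorem theta_X {R : Type*} [CommRing R] : theta R PowerSeries.X = PowerSeries.X := by
  simp [theta]

theorem theta_rescale {R : Type*} [CommRing R] (c : R) (f : R⟦X⟧) :
    theta R (PowerSeries.rescale c f) = PowerSeries.rescale c (theta R f) := by
  ext n; simp only [coeff_theta, PowerSeries.coeff_rescale]; ring

theorem theta_mul {R : Type*} [CommRing R] (f g : R⟦X⟧) :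
    theta R (f * g) = f * theta R g + g * theta R f := by
  rw [(theta R).leibniz]; rfl

theorem coeff_two_series (n : ℕ) :
    PowerSeries.coeff n (2 : ℚ⟦X⟧) = if n = 0 then 2 else 0 := by
  rw [← map_ofNat (PowerSeries.C (R := ℚ)) 2, PowerSeries.coeff_C]

theorem toda_to_rec (Z W : ℕ → ℚ⟦X⟧) (hZ0 : Z 0 = 1)
    (h1 : ∀ d : ℕ, (d : ℚ⟦X⟧) * Z d = ∑ p ∈ antidiagonal d, (p.1 : ℚ⟦X⟧) * W p.1 * Z p.2)
    (h2 : ∀ d : ℕ, ∑ p ∈ antidiagonal (d+1), ((p.1 : ℚ⟦X⟧)^2 - p.1 * p.2) * (Z p.1 * Z p.2)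
      = ∑ p ∈ antidiagonal d, Ex ((p.1 : ℚ) - p.2) * (Z p.1 * Z p.2)) (d : ℕ) :
    ((d : ℚ⟦X⟧) - 1) * ((d : ℚ⟦X⟧)^2 * W d) =
      ∑ p ∈ antidiagonal d, ((p.1 : ℚ⟦X⟧)^2 * W p.1) * (p.2 * (Ex p.2 + Ex (-p.2) - 2) * W p.2) := by
  let z : ℚ⟦X⟧⟦X⟧ := PowerSeries.mk Z
  let w : ℚ⟦X⟧⟦X⟧ := PowerSeries.mk W
  let T := theta ℚ⟦X⟧
  let x := T (T w)
  let zp := PowerSeries.rescale (Ex 1) z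
  let zm := PowerSeries.rescale (Ex (-1)) z
  let wp := PowerSeries.rescale (Ex 1) w
  let wm := PowerSeries.rescale (Ex (-1)) w
  have a1 : T z = z * T w := by
    ext1 n
    rw [mul_comm z, coeff_theta, PowerSeries.coeff_mul]
    simp only [T, coeff_theta, z, w, PowerSeries.coeff_mk]
    exact h1 n
  have ap : T zp = zp * T wp := by
    simp only [zp, wp, T, theta_rescale]; rw [← map_mul]; exact congrArg _ a1
  have am : T zm = zm * T wm := by
    simp only [zm, wm, T, theta_rescale]; rw [← map_mul]; exact congrArg _ a1
  have b1 : z * T (T z) - T z ^ 2 = PowerSeries.X * (zp * zm) := by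
    ext1 n
    cases n with
    | zero =>
      rw [map_sub, sq, PowerSeries.coeff_mul, PowerSeries.coeff_mul]
      simp [T, coeff_theta]
    | succ n =>
      rw [PowerSeries.coeff_succ_X_mul, mul_comm z, map_sub, sq, PowerSeries.coeff_mul, PowerSeries.coeff_mul,
        PowerSeries.coeff_mul, ← sum_sub_distrib]
      simp only [T, coeff_theta, z, w, zp, zm, PowerSeries.coeff_mk, PowerSeries.coeff_rescale]
      convert h2 n using 1
      · refine sum_congr rfl fun p _ => ?_
        ring
      · refine sum_congr rfl fun p _ => ?_
        rw [sub_eq_add_neg, Ex_add, Ex_pow, Ex_pow]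
        rw [mul_one, mul_neg_one]
        ring
  have hz : z ≠ 0 := by
    intro h
    have := congrArg (PowerSeries.coeff 0) h
    simp [z, hZ0] at this
  have b2 : z ^ 2 * x = PowerSeries.X * (zp * zm) := by
    have tm : ∀ f g : ℚ⟦X⟧⟦X⟧, T (f * g) = f * T g + g * T f := theta_mul
    rw [← b1, a1, tm, a1]
    simp only [x]
    ring
  have b3 : T x = x * (1 + T wp + T wm - 2 * T w) := by
    have := congrArg T b2
    have tm : ∀ f g : ℚ⟦X⟧⟦X⟧, T (f * g) = f * T g + g * T f := theta_mul
    rw [tm, tm, tm, sq, tm, a1, ap, am] at this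
    rw [show T PowerSeries.X = PowerSeries.X from theta_X] at this
    apply mul_left_cancel₀ (pow_ne_zero 2 hz)
    have e : z ^ 2 * T x = PowerSeries.X * (zp * zm) * (1 + T wp + T wm) - 2 * T w * (z^2*x) := by
      linear_combination this
    rw [e, ← b2]; ring
  have c := congrArg (PowerSeries.coeff d) b3
  have b4 : x * (1 + T wp + T wm - 2 * T w) = x + x * (T wp + T wm - 2 * T w) := by ring
  rw [b4, map_add, PowerSeries.coeff_mul] at c
  simp only [x, T, wp, wm, theta_rescale, map_add, map_sub, two_mul, coeff_theta, PowerSeries.coeff_rescale, w, PowerSeries.coeff_mk,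
    Ex_pow] at c
  calc _ = (d:ℚ⟦X⟧) * (d * (d * W d)) - d * (d * W d) := by ring
    _ = _ := by
      rw [c, add_sub_cancel_left]
      refine sum_congr rfl fun p _ => ?_
      rw [mul_one, mul_neg_one]
      ring

theorem rec_leading (W : ℕ → ℚ⟦X⟧)
    (hr : ∀ d : ℕ, ((d : ℚ⟦X⟧) - 1) * ((d : ℚ⟦X⟧)^2 * W d) =
      ∑ p ∈ antidiagonal d, ((p.1 : ℚ⟦X⟧)^2 * W p.1) * (p.2 * (Ex p.2 + Ex (-p.2) - 2) * W p.2))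
    (d : ℕ) (hd : 2 ≤ d) :
    2 * ((d : ℚ) - 1) * d * PowerSeries.coeff (2 * d - 2) (W d) =
      ∑ i ∈ Icc 1 (d-1), (i : ℚ)^2 * ((d - i : ℕ) : ℚ)^2 * PowerSeries.coeff (2 * i - 2) (W i)
        * PowerSeries.coeff (2 * (d - i) - 2) (W (d - i)) := by
  -- the factor is divisible by u²
  let S : ℕ → ℚ⟦X⟧ := fun j => PowerSeries.mk fun n => ((j:ℚ)^(n+2) + (-(j:ℚ))^(n+2)) / (n+2).factorial
  have hS : ∀ j : ℕ, Ex j + Ex (-j) - 2 = PowerSeries.X ^ 2 * S j := by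
    intro j
    ext n
    rcases n with _ | _ | n
    · rw [PowerSeries.coeff_X_pow_mul']
      simp only [map_sub, map_add, coeff_Ex]
      have : PowerSeries.coeff 0 (2 : ℚ⟦X⟧) = 2 := by
        rw [coeff_two_series]; simp
      rw [this]; norm_num
    · rw [PowerSeries.coeff_X_pow_mul']
      simp only [map_sub, map_add, coeff_Ex]
      have : PowerSeries.coeff (0+1) (2 : ℚ⟦X⟧) = 0 := by
        rw [coeff_two_series]; simp
      rw [this]; norm_num
    · rw [show n+1+1 = n+2 from rfl, PowerSeries.coeff_X_pow_mul]
      simp only [map_sub, map_add, coeff_Ex]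
      have : PowerSeries.coeff (n+2) (2 : ℚ⟦X⟧) = 0 := by
        rw [coeff_two_series]; simp
      rw [this]
      simp only [S, PowerSeries.coeff_mk]
      ring_nf
  have hS0 : ∀ j, PowerSeries.coeff 0 (S j) = (j:ℚ)^2 := by
    intro j; simp only [S, PowerSeries.coeff_mk]; norm_num
  have hrec : ∀ d : ℕ, 2 ≤ d → ((d : ℚ) - 1) * (d : ℚ)^2 ≠ 0 := by
    intro d hd
    have : (2:ℚ) ≤ d := by exact_mod_cast hd
    have h1 : (d:ℚ) - 1 ≠ 0 := by intro h; linarith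
    have h2 : (d:ℚ) ≠ 0 := by intro h; linarith
    positivity
  -- divisibility
  have hdiv : ∀ d : ℕ, 1 ≤ d → ∃ Y : ℚ⟦X⟧, W d = PowerSeries.X ^ (2 * d - 2) * Y := by
    intro d
    induction d using Nat.strong_induction_on with
    | _ d ih =>
      intro hd
      rcases Nat.lt_or_ge d 2 with h | h
      · have : d = 1 := by omega
        subst this; exact ⟨W 1, by simp⟩
      have key : (PowerSeries.X : ℚ⟦X⟧) ^ (2 * d - 2) ∣ ((d : ℚ⟦X⟧) - 1) * ((d : ℚ⟦X⟧)^2 * W d) := by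
        rw [hr]
        refine dvd_sum fun p hp => ?_
        rw [HasAntidiagonal.mem_antidiagonal] at hp
        rcases Nat.eq_zero_or_pos p.1 with h0 | h0
        · simp [h0]
        rcases Nat.eq_zero_or_pos p.2 with h0' | h0'
        · simp [h0']
        obtain ⟨Y1, e1⟩ := ih p.1 (by omega) h0
        obtain ⟨Y2, e2⟩ := ih p.2 (by omega) h0'
        rw [hS, e1, e2, show 2 * d - 2 = (2 * p.1 - 2) + 2 + (2 * p.2 - 2) by omega, pow_add, pow_add]
        exact ⟨(p.1)^2 * Y1 * p.2 * S p.2 * Y2, by ring⟩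
      have e : W d = PowerSeries.C ((((d : ℚ) - 1) * (d : ℚ)^2)⁻¹) * (((d : ℚ⟦X⟧) - 1) * ((d : ℚ⟦X⟧)^2 * W d)) := by
        have : ((d : ℚ⟦X⟧) - 1) * ((d : ℚ⟦X⟧)^2 * W d) = PowerSeries.C (((d : ℚ) - 1) * (d : ℚ)^2) * W d := by
          simp; ring
        rw [this, ← mul_assoc, ← map_mul, inv_mul_cancel₀ (hrec d h)]; simp
      rw [e]
      exact Dvd.dvd.mul_left key _
  choose! Y hY using hdiv
  have hc : ∀ i : ℕ, 1 ≤ i → PowerSeries.coeff (2 * i - 2) (W i) = PowerSeries.coeff 0 (Y i) := by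
    intro i hi
    conv_lhs => rw [hY i hi]
    rw [PowerSeries.coeff_X_pow_mul']; simp
  have m := congrArg (PowerSeries.coeff (2 * d - 2)) (hr d)
  have ml : PowerSeries.coeff (2 * d - 2) (((d : ℚ⟦X⟧) - 1) * ((d : ℚ⟦X⟧)^2 * W d)) = ((d:ℚ)-1) * d^2 * PowerSeries.coeff (2 * d - 2) (W d) := by
    have : ((d : ℚ⟦X⟧) - 1) * ((d : ℚ⟦X⟧)^2 * W d) = PowerSeries.C (((d : ℚ) - 1) * (d : ℚ)^2) * W d := by
          simp; ring
    rw [this, PowerSeries.coeff_C_mul]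
  let g : ℕ → ℚ := fun i => if i = 0 then 0 else (i:ℚ)^2 * PowerSeries.coeff (2 * i - 2) (W i)
  have mr : ∀ p ∈ antidiagonal d, PowerSeries.coeff (2 * d - 2) (((p.1 : ℚ⟦X⟧)^2 * W p.1) * ((p.2 : ℚ⟦X⟧) * (Ex p.2 + Ex (-p.2) - 2) * W p.2))
      = p.2 * (g p.1 * g p.2) := by
    intro p hp
    rw [HasAntidiagonal.mem_antidiagonal] at hp
    rcases Nat.eq_zero_or_pos p.1 with h0 | h0
    · simp [h0, g]
    rcases Nat.eq_zero_or_pos p.2 with h0' | h0'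
    · simp [h0', g]
    have : ((p.1 : ℚ⟦X⟧)^2 * W p.1) * ((p.2 : ℚ⟦X⟧) * (Ex p.2 + Ex (-p.2) - 2) * W p.2)
      = PowerSeries.X ^ (2 * d - 2) * (PowerSeries.C ((p.1:ℚ)^2 * p.2) * (Y p.1 * (S p.2 * Y p.2))) := by
      rw [hS, hY p.1 h0, hY p.2 h0', show 2 * d - 2 = (2 * p.1 - 2) + 2 + (2 * p.2 - 2) by omega, pow_add, pow_add]
      simp; ring
    rw [this, PowerSeries.coeff_X_pow_mul']
    simp only [le_refl, if_true, Nat.sub_self, PowerSeries.coeff_C_mul]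
    simp only [g, h0.ne', h0'.ne', if_false, hc _ h0, hc _ h0']
    have := hS0 p.2
    simp only [PowerSeries.coeff_zero_eq_constantCoeff] at *
    simp only [map_mul, this]
    ring
  rw [ml, map_sum, sum_congr rfl mr] at m
  have sw : ∑ p ∈ antidiagonal d, (p.2:ℚ) * (g p.1 * g p.2) = ∑ p ∈ antidiagonal d, (p.1:ℚ) * (g p.1 * g p.2) := by
    rw [← Finset.Nat.sum_antidiagonal_swap]
    refine sum_congr rfl fun p _ => ?_
    simp only [Prod.fst_swap, Prod.snd_swap]; ring
  have tot : ∑ p ∈ antidiagonal d, (p.2:ℚ) * (g p.1 * g p.2) + ∑ p ∈ antidiagonal d, (p.1:ℚ) * (g p.1 * g p.2)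
     = d * ∑ p ∈ antidiagonal d, (g p.1 * g p.2) := by
    rw [← sum_add_distrib, mul_sum]
    refine sum_congr rfl fun p hp => ?_
    rw [HasAntidiagonal.mem_antidiagonal] at hp
    rw [← hp]; push_cast; ring
  have fin : ∑ p ∈ antidiagonal d, (g p.1 * g p.2) = ∑ i ∈ Icc 1 (d-1), (i : ℚ)^2 * ((d - i : ℕ) : ℚ)^2 * PowerSeries.coeff (2 * i - 2) (W i)
        * PowerSeries.coeff (2 * (d - i) - 2) (W (d - i)) := by
    rw [Nat.sum_antidiagonal_eq_sum_range_succ_mk]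
    symm
    apply sum_subset_zero_on_sdiff
    · intro i hi; simp at hi ⊢; omega
    · intro i hi
      simp at hi
      have : i = 0 ∨ d - i = 0 := by omega
      rcases this with h | h <;> simp [g, h]
    · intro i hi
      simp at hi
      have h1 : i ≠ 0 := by omega
      have h2 : d - i ≠ 0 := by omega
      simp only [g, h1, h2, if_false]
      ring
  rw [← fin]
  have hd0 : (d:ℚ) ≠ 0 := by
    have : d ≠ 0 := by omega
    exact_mod_cast this
  apply mul_left_cancel₀ hd0
  linear_combination 2 * m + tot + sw
end

section
open Finset

/-- sum of `f` over all words of length `r` -/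
def Tw (X : Type*) [Fintype X] (r : ℕ) (f : List X → ℚ) : ℚ := ∑ v : Fin r → X, f (List.ofFn v)

theorem Tw_zero {X : Type*} [Fintype X] (f : List X → ℚ) : Tw X 0 f = f [] := by
  simp [Tw]

theorem Tw_succ {X : Type*} [Fintype X] (r : ℕ) (f : List X → ℚ) :
    Tw X (r+1) f = ∑ x, Tw X r (fun l => f (x :: l)) := by
  unfold Tw
  rw [← Fintype.sum_prod_type' (f := fun x (v : Fin r → X) => f (x :: List.ofFn v))]
  rw [← (Fin.consEquiv (fun _ : Fin (r+1) => X)).sum_comp]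
  refine sum_congr rfl fun p _ => ?_
  simp [Fin.consEquiv, List.ofFn_cons]

theorem Tw_congr {X : Type*} [Fintype X] (r : ℕ) {f g : List X → ℚ} (h : ∀ l, f l = g l) :
    Tw X r f = Tw X r g := by
  rw [funext h]

theorem Tw_sum {X ι : Type*} [Fintype X] (r : ℕ) (s : Finset ι) (f : ι → List X → ℚ) :
    Tw X r (fun l => ∑ i ∈ s, f i l) = ∑ i ∈ s, Tw X r (f i) := by
  unfold Tw; rw [sum_comm]

theorem Tw_map {X Y : Type*} [Fintype X] [Fintype Y] (e : X → Y) (he : Function.Injective e)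
    (r : ℕ) (f : List Y → ℚ) (hf : ∀ l y, y ∈ l → y ∉ Set.range e → f l = 0) :
    Tw Y r f = Tw X r (fun l => f (l.map e)) := by
  classical
  induction r generalizing f with
  | zero => simp [Tw_zero]
  | succ r ih =>
    rw [Tw_succ, Tw_succ]
    rw [← sum_subset (subset_univ (univ.image e))]
    · rw [sum_image (fun a _ b _ h => he h)]
      refine sum_congr rfl fun x _ => ?_
      rw [ih]
      · rfl
      · intro l y hy hy'
        exact hf _ y (List.mem_cons_of_mem _ hy) hy'
    · intro y _ hy
      have : (fun l => f (y :: l)) = fun _ => 0 := by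
        funext l
        apply hf _ y List.mem_cons_self
        simpa using hy
      rw [this]; simp [Tw]

def lefts {X Y : Type*} (l : List (X ⊕ Y)) : List X := l.filterMap Sum.getLeft?
def rights {X Y : Type*} (l : List (X ⊕ Y)) : List Y := l.filterMap Sum.getRight?

theorem Tw_shuffle {X Y : Type*} [Fintype X] [Fintype Y] (r : ℕ) (f : List X → ℚ) (g : List Y → ℚ) :
    Tw (X ⊕ Y) r (fun l => f (lefts l) * g (rights l)) =
      ∑ p ∈ antidiagonal r, (r.choose p.1 : ℚ) * (Tw X p.1 f * Tw Y p.2 g) := by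
  induction r generalizing f g with
  | zero => simp [Tw_zero, lefts, rights]
  | succ r ih =>
    have h := Finset.sum_antidiagonal_choose_succ_mul (fun i j => Tw X i f * Tw Y j g) r
    rw [h, Tw_succ, Fintype.sum_sum_type]
    have h1 : ∀ x : X, Tw (X ⊕ Y) r (fun l => f (lefts (Sum.inl x :: l)) * g (rights (Sum.inl x :: l)))
        = ∑ p ∈ antidiagonal r, (r.choose p.1 : ℚ) * (Tw X p.1 (fun l => f (x :: l)) * Tw Y p.2 g) := by
      intro x; rw [← ih]; rfl
    have h2 : ∀ y : Y, Tw (X ⊕ Y) r (fun l => f (lefts (Sum.inr y :: l)) * g (rights (Sum.inr y :: l)))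
        = ∑ p ∈ antidiagonal r, (r.choose p.1 : ℚ) * (Tw X p.1 f * Tw Y p.2 (fun l => g (y :: l))) := by
      intro x; rw [← ih]; rfl
    simp_rw [h1, h2]
    rw [sum_comm, sum_comm (s := univ), add_comm]
    congr 1
    · refine sum_congr rfl fun p _ => ?_
      rw [← mul_sum, ← mul_sum, ← Tw_succ]
    · refine sum_congr rfl fun p hp => ?_
      rw [← mul_sum, ← sum_mul, ← Tw_succ]
      rw [HasAntidiagonal.mem_antidiagonal] at hp
      rw [← Nat.choose_symm_of_eq_add (show r = p.1 + p.2 by omega)]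
end

section
open Finset Equiv

abbrev Swp (α : Type*) [DecidableEq α] := {τ : Perm α // τ.IsSwap}

noncomputable instance swpFintype (α : Type*) [DecidableEq α] [Fintype α] : Fintype (Swp α) :=
  Fintype.ofFinite _

section
variable {α : Type*} [DecidableEq α] 

/-- product of a word of swaps -/
def prw (l : List (Swp α)) : Perm α := (l.map Subtype.val).prod

def Invt (S : Finset α) (l : List (Swp α)) : Prop := ∀ τ ∈ l, ∀ x ∈ S, τ.1 x ∈ S

def Conn (x0 : α) (l : List (Swp α)) : Prop := ∀ S : Finset α, x0 ∈ S → Invt S l → ∀ x, x ∈ S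

def IsOrb (x0 : α) (S : Finset α) (l : List (Swp α)) : Prop :=
  x0 ∈ S ∧ Invt S l ∧ ∀ S', x0 ∈ S' → Invt S' l → S ⊆ S'

open Classical in
noncomputable def IA (l : List (Swp α)) : ℚ := if prw l = 1 then 1 else 0
open Classical in
noncomputable def IC (x0 : α) (l : List (Swp α)) : ℚ := if prw l = 1 ∧ Conn x0 l then 1 else 0
open Classical in
noncomputable def IJ (x0 : α) (S : Finset α) (l : List (Swp α)) : ℚ :=
  if prw l = 1 ∧ IsOrb x0 S l then 1 else 0

variable [Fintype α]

theorem exists_orb (x0 : α) (l : List (Swp α)) : ∃! S, IsOrb x0 S l := by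
  classical
  refine ⟨univ.filter (fun y => ∀ S : Finset α, x0 ∈ S → Invt S l → y ∈ S), ⟨?_, ?_, ?_⟩, ?_⟩
  · simp only [mem_filter, mem_univ, true_and]; intro S h _; exact h
  · intro τ hτ x hx
    simp only [mem_filter, mem_univ, true_and] at hx ⊢
    intro S h h'
    exact h' τ hτ x (hx S h h')
  · intro S' h h' y hy
    simp only [mem_filter, mem_univ, true_and] at hy
    exact hy S' h h'
  · intro S ⟨h1, h2, h3⟩
    ext y
    simp only [mem_filter, mem_univ, true_and]
    exact ⟨fun hy S' h h' => h3 S' h h' hy, fun h => h S h1 h2⟩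

theorem IA_eq_sum (x0 : α) (l : List (Swp α)) :
    IA l = ∑ S ∈ univ.filter (fun S : Finset α => x0 ∈ S), IJ x0 S l := by
  classical
  obtain ⟨S, hS, hu⟩ := exists_orb x0 l
  rw [sum_eq_single S]
  · simp [IA, IJ, hS]
  · intro S' _ hne
    simp only [IJ]
    rw [if_neg]
    rintro ⟨_, h⟩
    exact hne (hu S' h)
  · intro h
    exact absurd hS.1 (by simpa using h)

/-- embed swaps of the two parts -/
noncomputable def emb (S : Finset α) : Swp {x // x ∈ S} ⊕ Swp {x // x ∉ S} → Swp α
  | Sum.inl τ => ⟨Perm.ofSubtype τ.1, τ.2.of_subtype_isSwap⟩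
  | Sum.inr τ => ⟨Perm.ofSubtype τ.1, τ.2.of_subtype_isSwap⟩

theorem swap_moves (τ : Swp α) : ∃ x, τ.1 x ≠ x := by
  obtain ⟨τ, x, y, hxy, rfl⟩ := τ
  exact ⟨x, by simpa using hxy.symm⟩

theorem emb_inj (S : Finset α) : Function.Injective (emb S) := by
  rintro (a | a) (b | b) h
  · simp only [emb, Subtype.mk.injEq] at h
    rw [Sum.inl.injEq]
    exact Subtype.ext (Perm.ofSubtype_injective h)
  · exfalso
    simp only [emb, Subtype.mk.injEq] at h
    obtain ⟨x, hx⟩ := swap_moves a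
    have := congrArg (fun f => f x.1) h
    rw [Perm.ofSubtype_apply_coe, Perm.ofSubtype_apply_of_not_mem _ (by simpa using x.2)] at this
    exact hx (Subtype.ext this)
  · exfalso
    simp only [emb, Subtype.mk.injEq] at h
    obtain ⟨x, hx⟩ := swap_moves a
    have := congrArg (fun f => f x.1) h
    rw [Perm.ofSubtype_apply_coe, Perm.ofSubtype_apply_of_not_mem _ x.2] at this
    exact hx (Subtype.ext this)
  · simp only [emb, Subtype.mk.injEq] at h
    rw [Sum.inr.injEq]
    exact Subtype.ext (Perm.ofSubtype_injective h)

theorem emb_range (S : Finset α) (τ : Swp α) (h : ∀ x ∈ S, τ.1 x ∈ S) : τ ∈ Set.range (emb S) := by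
  obtain ⟨τ, x, y, hxy, rfl⟩ := τ
  by_cases hx : x ∈ S
  · have hy : y ∈ S := by simpa using h x hx
    refine ⟨Sum.inl ⟨swap ⟨x, hx⟩ ⟨y, hy⟩, ⟨x, hx⟩, ⟨y, hy⟩, by simpa using hxy, rfl⟩, ?_⟩
    simp [emb, Perm.ofSubtype_swap_eq]
  · have hy : y ∉ S := fun hy => hx (by simpa using h y hy)
    refine ⟨Sum.inr ⟨swap ⟨x, hx⟩ ⟨y, hy⟩, ⟨x, hx⟩, ⟨y, hy⟩, by simpa using hxy, rfl⟩, ?_⟩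
    simp [emb, Perm.ofSubtype_swap_eq]

theorem emb_forall (S : Finset α) (P : Swp α → Prop) (l : List (Swp {x // x ∈ S} ⊕ Swp {x // x ∉ S})) :
    (∀ τ ∈ l.map (emb S), P τ) ↔ (∀ τ ∈ lefts l, P (emb S (Sum.inl τ))) ∧
      (∀ τ ∈ rights l, P (emb S (Sum.inr τ))) := by
  induction l with
  | nil => simp [lefts, rights]
  | cons a l ih =>
    rcases a with a | a
    · rw [show lefts (Sum.inl a :: l) = a :: lefts l from rfl,
        show rights (Sum.inl a :: l) = rights l from rfl, List.map_cons, List.forall_mem_cons,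
        List.forall_mem_cons, ih, and_assoc]
    · rw [show lefts (Sum.inr a :: l) = lefts l from rfl,
        show rights (Sum.inr a :: l) = a :: rights l from rfl, List.map_cons, List.forall_mem_cons,
        List.forall_mem_cons, ih]
      tauto

theorem prw_emb (S : Finset α) (l : List (Swp {x // x ∈ S} ⊕ Swp {x // x ∉ S})) :
    (∀ x : {x // x ∈ S}, prw (l.map (emb S)) x = (prw (lefts l) x : α)) ∧
    (∀ x : {x // x ∉ S}, prw (l.map (emb S)) x = (prw (rights l) x : α)) := by
  induction l with
  | nil => simp [lefts, rights, prw]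
  | cons a l ih =>
    have hc : ∀ {β : Type _} [DecidableEq β] (a : Swp β) (l : List (Swp β)) (x : β), prw (a :: l) x = a.1 (prw l x) := by
      intros; simp [prw]
    rcases a with a | a
    · rw [show lefts (Sum.inl a :: l) = a :: lefts l from rfl,
        show rights (Sum.inl a :: l) = rights l from rfl, List.map_cons]
      refine ⟨fun x => ?_, fun x => ?_⟩
      · rw [hc, ih.1, hc]; simp only [emb]; rw [Perm.ofSubtype_apply_coe]
      · rw [hc, ih.2]; simp only [emb]; rw [Perm.ofSubtype_apply_of_not_mem]
        exact (prw (rights l) x).2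
    · rw [show lefts (Sum.inr a :: l) = lefts l from rfl,
        show rights (Sum.inr a :: l) = a :: rights l from rfl, List.map_cons]
      refine ⟨fun x => ?_, fun x => ?_⟩
      · rw [hc, ih.1]; simp only [emb]; rw [Perm.ofSubtype_apply_of_not_mem]
        simpa using (prw (lefts l) x).2
      · rw [hc, ih.2, hc]; simp only [emb]; rw [Perm.ofSubtype_apply_coe]

theorem prw_emb_one (S : Finset α) (l : List (Swp {x // x ∈ S} ⊕ Swp {x // x ∉ S})) :
    prw (l.map (emb S)) = 1 ↔ prw (lefts l) = 1 ∧ prw (rights l) = 1 := by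
  obtain ⟨h1, h2⟩ := prw_emb S l
  constructor
  · intro h
    refine ⟨Equiv.ext fun x => Subtype.ext ?_, Equiv.ext fun x => Subtype.ext ?_⟩
    · rw [← h1, h]; rfl
    · rw [← h2, h]; rfl
  · rintro ⟨e1, e2⟩
    refine Equiv.ext fun x => ?_
    by_cases hx : x ∈ S
    · have := h1 ⟨x, hx⟩; rw [e1] at this; exact this
    · have := h2 ⟨x, hx⟩; rw [e2] at this; exact this

theorem isOrb_emb (S : Finset α) (x0 : α) (h0 : x0 ∈ S) (l : List (Swp {x // x ∈ S} ⊕ Swp {x // x ∉ S})) :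
    IsOrb x0 S (l.map (emb S)) ↔ Conn (⟨x0, h0⟩ : {x // x ∈ S}) (lefts l) := by
  have hinv : ∀ S', Invt S' (l.map (emb S)) ↔ _ := fun S' =>
    emb_forall S (fun τ => ∀ x ∈ S', τ.1 x ∈ S') l
  constructor
  · rintro ⟨_, _, h3⟩ S1 hx1 hI x
    have := h3 (S1.map (Function.Embedding.subtype _)) ?_ ?_ x.2
    · simpa using this
    · simpa using ⟨h0, hx1⟩
    · rw [hinv]
      constructor
      · intro τ hτ y hy
        simp only [mem_map, Function.Embedding.subtype_apply] at hy
        obtain ⟨y, hy, rfl⟩ := hy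
        simp only [emb]; rw [Perm.ofSubtype_apply_coe]
        simp only [mem_map, Function.Embedding.subtype_apply]
        exact ⟨_, hI τ hτ y hy, rfl⟩
      · intro τ hτ y hy
        simp only [mem_map, Function.Embedding.subtype_apply] at hy
        obtain ⟨y, hy, rfl⟩ := hy
        simp only [emb]; rw [Perm.ofSubtype_apply_of_not_mem _ (by simpa using y.2)]
        simp only [mem_map, Function.Embedding.subtype_apply]
        exact ⟨y, hy, rfl⟩
  · intro hC
    refine ⟨h0, ?_, ?_⟩
    · rw [hinv]
      constructor
      · intro τ hτ y hy
        simp only [emb]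
        rw [Perm.ofSubtype_apply_of_mem _ hy]
        exact (τ.1 ⟨y, hy⟩).2
      · intro τ hτ y hy
        simp only [emb]; rw [Perm.ofSubtype_apply_of_not_mem _ (by simpa using hy)]
        exact hy
    · intro S' hx0 hI x hx
      rw [hinv] at hI
      have := hC (univ.filter (fun x : {x // x ∈ S} => x.1 ∈ S')) (by simpa using hx0) ?_ ⟨x, hx⟩
      · simpa using this
      · intro τ hτ y hy
        simp only [mem_filter, mem_univ, true_and] at hy ⊢
        have := hI.1 τ hτ _ hy
        simp only [emb] at this
        rw [Perm.ofSubtype_apply_coe] at this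
        exact this

theorem Tw_IJ (S : Finset α) (x0 : α) (h0 : x0 ∈ S) (r : ℕ) :
    Tw (Swp α) r (IJ x0 S) = ∑ p ∈ antidiagonal r, (r.choose p.1 : ℚ) *
      (Tw (Swp {x // x ∈ S}) p.1 (IC ⟨x0, h0⟩) * Tw (Swp {x // x ∉ S}) p.2 IA) := by
  classical
  rw [← Tw_shuffle, Tw_map (emb S) (emb_inj S)]
  · refine Tw_congr _ fun l => ?_
    simp only [IJ, IC, IA, prw_emb_one, isOrb_emb S x0 h0]
    split_ifs <;> simp_all
  · intro l τ hτ hn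
    simp only [IJ]
    rw [if_neg]
    rintro ⟨_, _, h, _⟩
    exact hn (emb_range S τ (h τ hτ))

theorem Tw_IA (x0 : α) (r : ℕ) : Tw (Swp α) r IA =
    ∑ S ∈ univ.filter (fun S : Finset α => x0 ∈ S), Tw (Swp α) r (IJ x0 S) := by
  rw [← Tw_sum]
  exact Tw_congr _ fun l => IA_eq_sum x0 l

end
end

section
open Finset Equiv
open scoped PowerSeries

theorem ite_iff {p q : Prop} {i : Decidable p} {j : Decidable q} (h : p ↔ q) :
    (if p then (1 : ℚ) else 0) = if q then 1 else 0 := by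
  by_cases hp : p
  · rw [if_pos hp, if_pos (h.1 hp)]
  · rw [if_neg hp, if_neg (fun hq => hp (h.2 hq))]

section
variable {α β : Type*} [DecidableEq α] [DecidableEq β] [Fintype α] [Fintype β]

/-- transport of swaps -/
def swpMap (e : α ≃ β) (τ : Swp α) : Swp β := ⟨e.permCongr τ.1, by
  obtain ⟨τ, x, y, hxy, rfl⟩ := τ
  refine ⟨e x, e y, by simpa using hxy, ?_⟩
  ext z
  simp only [Equiv.permCongr_apply, Equiv.swap_apply_def]
  simp only [Equiv.symm_apply_eq]
  split_ifs <;> simp⟩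

theorem swpMap_inj (e : α ≃ β) : Function.Injective (swpMap e) := by
  intro a b h
  simp only [swpMap, Subtype.mk.injEq] at h
  exact Subtype.ext (e.permCongr.injective h)

theorem swpMap_surj (e : α ≃ β) : Function.Surjective (swpMap e) := by
  intro b
  refine ⟨swpMap e.symm b, Subtype.ext ?_⟩
  ext x
  simp [swpMap]

theorem prw_map (e : α ≃ β) (l : List (Swp α)) (x : α) : prw (l.map (swpMap e)) (e x) = e (prw l x) := by
  induction l with
  | nil => simp [prw]
  | cons a l ih =>
    have hc : ∀ {β : Type _} [DecidableEq β] (a : Swp β) (l : List (Swp β)) (x : β), prw (a :: l) x = a.1 (prw l x) := by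
      intros; simp [prw]
    have hc' : ∀ (a : Swp α) (l : List (Swp α)) (x : α), prw (a :: l) x = a.1 (prw l x) := by
      intros; simp [prw]
    rw [List.map_cons, hc, ih, hc']
    simp [swpMap]

theorem prw_map_one (e : α ≃ β) (l : List (Swp α)) : prw (l.map (swpMap e)) = 1 ↔ prw l = 1 := by
  constructor
  · intro h
    refine Equiv.ext fun x => e.injective ?_
    rw [← prw_map, h]; rfl
  · intro h
    refine Equiv.ext fun x => ?_
    obtain ⟨x, rfl⟩ := e.surjective x
    rw [prw_map, h]; rfl

theorem invt_map (e : α ≃ β) (S : Finset α) (l : List (Swp α)) :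
    Invt (S.map e.toEmbedding) (l.map (swpMap e)) ↔ Invt S l := by
  have e1 : ∀ τ : Swp α, (∀ x ∈ S.map e.toEmbedding, (swpMap e τ).1 x ∈ S.map e.toEmbedding) ↔
      ∀ x ∈ S, τ.1 x ∈ S := by
    intro τ
    simp only [swpMap, Finset.forall_mem_map, Equiv.coe_toEmbedding, Equiv.permCongr_apply,
      Equiv.symm_apply_apply]
    simp
  unfold Invt
  rw [List.forall_mem_map]
  exact forall₂_congr fun τ _ => e1 τ

theorem conn_map (e : α ≃ β) (x0 : α) (l : List (Swp α)) :
    Conn (e x0) (l.map (swpMap e)) ↔ Conn x0 l := by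
  constructor
  · intro h S h0 hI x
    have := h (S.map e.toEmbedding) (by simpa using h0) ((invt_map e S l).2 hI) (e x)
    simpa using this
  · intro h S h0 hI x
    have hS : S = (S.map e.symm.toEmbedding).map e.toEmbedding := by
      ext; simp
    rw [hS] at h0 hI ⊢
    rw [invt_map] at hI
    have := h _ (by simpa using h0) hI (e.symm x)
    simpa using this

theorem Tw_IA_congr (e : α ≃ β) (r : ℕ) : Tw (Swp α) r IA = Tw (Swp β) r IA := by
  rw [Tw_map (swpMap e) (swpMap_inj e) r (IA (α := β))]
  · refine Tw_congr _ fun l => ?_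
    exact ite_iff (prw_map_one e l).symm
  · intro l y _ h
    exact absurd (swpMap_surj e y) h

theorem Tw_IC_congr (e : α ≃ β) (x0 : α) (r : ℕ) : Tw (Swp α) r (IC x0) = Tw (Swp β) r (IC (e x0)) := by
  rw [Tw_map (swpMap e) (swpMap_inj e) r (IC (e x0))]
  · refine Tw_congr _ fun l => ?_
    exact ite_iff (and_congr (prw_map_one e l).symm (conn_map e x0 l).symm)
  · intro l y _ h
    exact absurd (swpMap_surj e y) h

theorem conn_iff (x0 : α) (r : ℕ) (v : Fin r → Swp α) : Conn x0 (List.ofFn v) ↔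
    ∀ x y : α, ∃ σ ∈ Subgroup.closure (Set.range (fun i => (v i).1)), σ x = y := by
  classical
  constructor
  · intro h
    have h1 : ∀ y, ∃ σ ∈ Subgroup.closure (Set.range (fun i => (v i).1)), σ x0 = y := by
      intro y
      have := h (univ.filter (fun y => ∃ σ ∈ Subgroup.closure (Set.range (fun i => (v i).1)), σ x0 = y))
        (by simp only [mem_filter, mem_univ, true_and]; exact ⟨1, one_mem _, rfl⟩) ?_ y
      · simpa only [mem_filter, mem_univ, true_and] using this
      · intro τ hτ x hx
        simp only [mem_filter, mem_univ, true_and] at hx ⊢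
        obtain ⟨σ, hσ, rfl⟩ := hx
        rw [List.mem_ofFn] at hτ
        obtain ⟨i, rfl⟩ := hτ
        exact ⟨(v i).1 * σ, mul_mem (Subgroup.subset_closure ⟨i, rfl⟩) hσ, rfl⟩
    intro x y
    obtain ⟨σ, hσ, rfl⟩ := h1 x
    obtain ⟨ρ, hρ, rfl⟩ := h1 y
    exact ⟨ρ * σ⁻¹, mul_mem hρ (inv_mem hσ), by simp⟩
  · intro h S h0 hI y
    obtain ⟨σ, hσ, rfl⟩ := h x0 y
    have : ∀ x, x ∈ S ↔ σ x ∈ S := by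
      induction hσ using Subgroup.closure_induction with
      | mem σ hσ =>
        obtain ⟨i, rfl⟩ := hσ
        have hi : v i ∈ List.ofFn v := by rw [List.mem_ofFn]; exact ⟨i, rfl⟩
        intro x
        refine ⟨hI _ hi x, fun hx => ?_⟩
        have := hI _ hi _ hx
        obtain ⟨a, b, _, hab⟩ := (v i).2
        simp only [hab, Equiv.swap_apply_self] at this
        exact this
      | one => simp
      | mul σ ρ _ _ h1 h2 => intro x; rw [h2, h1]; rfl
      | inv σ _ h1 => intro x; rw [h1 (σ⁻¹ x)]; simp
    exact (this x0).1 h0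

theorem Tw_IC_fin (d r : ℕ) (x0 : Fin d) : Tw (Swp (Fin d)) r (IC x0) = hurwitzTupleCount d r := by
  classical
  unfold Tw hurwitzTupleCount
  have hI : ∀ v : Fin r → Swp (Fin d), IC x0 (List.ofFn v) =
      if (fun v : Fin r → Swp (Fin d) => prw (List.ofFn v) = 1 ∧ Conn x0 (List.ofFn v)) v then 1 else 0 :=
    fun v => ite_iff Iff.rfl
  simp_rw [hI]
  rw [← sum_filter, sum_const, nsmul_eq_mul, mul_one, ← Fintype.card_subtype, ← Nat.card_eq_fintype_card]
  congr 1
  refine Nat.card_congr ⟨fun v => ⟨fun i => (v.1 i).1, fun i => (v.1 i).2, ?_, ?_⟩,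
    fun τ => ⟨fun i => ⟨τ.1 i, τ.2.1 i⟩, ?_, ?_⟩, fun _ => rfl, fun _ => rfl⟩
  · have := v.2.1
    rwa [prw, List.map_ofFn] at this
  · exact (conn_iff x0 r v.1).1 v.2.2
  · rw [prw, List.map_ofFn]; exact τ.2.2.1
  · rw [conn_iff]; exact τ.2.2.2

/-- number of words of swaps with trivial product -/
noncomputable def Acount (d r : ℕ) : ℚ := Tw (Swp (Fin d)) r IA

theorem exp_count (d r : ℕ) : (d : ℚ) * Acount d r =
    ∑ k ∈ range (d+1), (d.choose k : ℚ) * ((k : ℚ) * ∑ p ∈ antidiagonal r, (r.choose p.1 : ℚ) *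
      (hurwitzTupleCount k p.1 * Acount (d - k) p.2)) := by
  classical
  let F : ℕ → ℚ := fun k => ∑ p ∈ antidiagonal r, (r.choose p.1 : ℚ) *
      (hurwitzTupleCount k p.1 * Acount (d - k) p.2)
  have h1 : ∀ (S : Finset (Fin d)) (x0 : Fin d), x0 ∈ S → Tw (Swp (Fin d)) r (IJ x0 S) = F #S := by
    intro S x0 h0
    rw [Tw_IJ S x0 h0]
    refine sum_congr rfl fun p _ => ?_
    have e1 : {x // x ∈ S} ≃ Fin #S := Fintype.equivFinOfCardEq (by simp)
    have e2 : {x // x ∉ S} ≃ Fin (d - #S) := Fintype.equivFinOfCardEq (by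
      rw [Fintype.card_subtype_compl]; simp)
    rw [Tw_IC_congr e1, Tw_IC_fin, Tw_IA_congr e2, Acount]
  calc (d : ℚ) * Acount d r = ∑ x0 : Fin d, Tw (Swp (Fin d)) r IA := by simp [Acount]
    _ = ∑ x0 : Fin d, ∑ S ∈ univ.filter (fun S : Finset (Fin d) => x0 ∈ S), F #S := by
      refine sum_congr rfl fun x0 _ => ?_
      rw [Tw_IA x0]
      refine sum_congr rfl fun S hS => ?_
      exact h1 S x0 (by simpa using hS)
    _ = ∑ S : Finset (Fin d), (#S : ℚ) * F #S := by
      simp_rw [sum_filter]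
      rw [sum_comm]
      refine sum_congr rfl fun S _ => ?_
      rw [← sum_filter, sum_const, nsmul_eq_mul]
      congr 3
      ext; simp
    _ = ∑ S ∈ (univ : Finset (Fin d)).powerset, (#S : ℚ) * F #S := by simp
    _ = _ := by
      rw [Finset.sum_powerset_apply_card (fun k => (k : ℚ) * F k)]
      simp [F]

/-- generating series in the length -/
noncomputable def Zs (d : ℕ) : ℚ⟦X⟧ :=
  PowerSeries.mk fun r => Acount d r / (r.factorial * d.factorial)
noncomputable def Ws (d : ℕ) : ℚ⟦X⟧ :=
  PowerSeries.mk fun r => hurwitzTupleCount d r / (r.factorial * d.factorial)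

theorem exp_formula (d : ℕ) : (d : ℚ⟦X⟧) * Zs d =
    ∑ p ∈ antidiagonal d, (p.1 : ℚ⟦X⟧) * Ws p.1 * Zs p.2 := by
  ext r
  have hn : ∀ n : ℕ, (n : ℚ⟦X⟧) = PowerSeries.C (n : ℚ) := fun n => by simp
  simp_rw [map_sum, hn, mul_assoc, PowerSeries.coeff_C_mul, PowerSeries.coeff_mul]
  simp only [Zs, Ws, PowerSeries.coeff_mk]
  rw [← mul_div_assoc, exp_count, Nat.sum_antidiagonal_eq_sum_range_succ_mk, sum_div]
  refine sum_congr rfl fun k hk => ?_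
  rw [mul_sum, mul_sum, mul_sum, sum_div]
  refine sum_congr rfl fun p hp => ?_
  rw [HasAntidiagonal.mem_antidiagonal] at hp
  simp only [mem_range] at hk
  have hk' : k ≤ d := by omega
  subst hp
  rw [Nat.cast_choose ℚ hk', Nat.cast_add_choose]
  have := fun n : ℕ => (Nat.cast_ne_zero (R := ℚ)).2 (Nat.factorial_ne_zero n)
  have a1 := this (p.1 + p.2)
  have a2 := this d
  have a3 := this k
  have a4 := this (d-k)
  have a5 := this p.1
  have a6 := this p.2
  field_simp
end
end

section
open Finset

section
variable (N : ℕ)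

abbrev MP := MvPolynomial (Fin N) ℚ

/-- Vandermonde determinant in the variables -/
noncomputable def Vd : MP N := (Matrix.vandermonde (fun i : Fin N => (MvPolynomial.X i : MP N))).det

/-- Euler derivations -/
noncomputable def Dv (i : Fin N) : Derivation ℚ (MP N) (MP N) :=
  (MvPolynomial.X i : MP N) • MvPolynomial.pderiv i

theorem Dv_X (i j : Fin N) : Dv N i (MvPolynomial.X j) = if j = i then MvPolynomial.X i else 0 := by
  rw [Dv, Derivation.smul_apply, MvPolynomial.pderiv_X]
  by_cases h : j = i
  · subst h; simp
  · simp [h, Pi.single_apply]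

/-- pairs of indices -/
def prs : Finset (Fin N × Fin N) := univ.filter fun p => p.1 < p.2

theorem Vd_eq : Vd N = ∏ p ∈ prs N, (MvPolynomial.X p.2 - MvPolynomial.X p.1) := by
  rw [Vd, Matrix.det_vandermonde, prs, prod_filter, ← univ_product_univ, prod_product]
  refine prod_congr rfl fun i _ => ?_
  rw [← prod_filter]
  refine prod_congr ?_ fun _ _ => rfl
  ext; simp

theorem X_sub_ne (i j : Fin N) (h : i ≠ j) : (MvPolynomial.X i - MvPolynomial.X j : MP N) ≠ 0 := by
  rw [sub_ne_zero]
  exact fun e => h (MvPolynomial.X_injective e)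

theorem Vd_ne : Vd N ≠ 0 := by
  rw [Vd_eq, prod_ne_zero_iff]
  intro p hp
  simp only [prs, mem_filter, mem_univ, true_and] at hp
  exact X_sub_ne N _ _ hp.ne'

theorem exists_Uq : ∃ U : Fin N → Fin N → MP N,
    (∀ i j, i ≠ j → (MvPolynomial.X i - MvPolynomial.X j) * U i j = Vd N) ∧
    (∀ i j, U j i = - U i j) ∧
    (∀ i, Dv N i (Vd N) = ∑ j ∈ univ.erase i, MvPolynomial.X i * U i j) := by
  have hp : ∀ i j : Fin N, i < j → (MvPolynomial.X j - MvPolynomial.X i : MP N) *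
      (∏ q ∈ (prs N).erase (i, j), (MvPolynomial.X q.2 - MvPolynomial.X q.1)) = Vd N := by
    intro i j h
    rw [Vd_eq]
    exact mul_prod_erase (prs N) (fun q => (MvPolynomial.X q.2 - MvPolynomial.X q.1 : MP N)) (a := (i, j))
      (by simp [prs, h])
  let E : Fin N → Fin N → MP N := fun i j => ∏ q ∈ (prs N).erase (i, j), (MvPolynomial.X q.2 - MvPolynomial.X q.1)
  let U : Fin N → Fin N → MP N := fun i j => if j < i then E j i else if i < j then - E i j else 0
  have hlt : ∀ i j, j < i → U i j = E j i := fun i j h => by simp [U, h]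
  have hgt : ∀ i j, i < j → U i j = - E i j := fun i j h => by simp [U, h, not_lt_of_gt h]
  refine ⟨U, ?_, ?_, ?_⟩
  · intro i j h
    rcases lt_or_gt_of_ne h with h | h
    · rw [hgt i j h, ← hp i j h]; ring
    · rw [hlt i j h, ← hp j i h]
  · intro i j
    rcases lt_trichotomy i j with h | h | h
    · rw [hgt i j h, hlt j i h]; ring
    · subst h; simp [U]
    · rw [hlt i j h, hgt j i h]
  · intro i
    have h1 : Dv N i (Vd N) = ∑ p ∈ prs N, E p.1 p.2 * Dv N i (MvPolynomial.X p.2 - MvPolynomial.X p.1) := by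
      rw [Vd_eq, der_prod]
    rw [h1, prs, sum_filter, ← univ_product_univ, sum_product]
    have h2 : ∀ a b : Fin N, (if a < b then E a b * Dv N i (MvPolynomial.X b - MvPolynomial.X a) else 0)
       = (if b = i then (if a < b then E a b * MvPolynomial.X i else 0) else 0)
        - (if a = i then (if a < b then E a b * MvPolynomial.X i else 0) else 0) := by
      intro a b
      rw [map_sub, Dv_X, Dv_X]
      split_ifs <;> ring
    simp only [h2, sum_sub_distrib]
    rw [sum_comm (f := fun a b => if a = i then (if a < b then E a b * MvPolynomial.X i else 0) else 0)]
    simp only [sum_ite_eq', mem_univ, if_true]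
    rw [← sum_sub_distrib, ← sum_erase (a := i) univ (by simp)]
    refine sum_congr rfl fun j hj => ?_
    have hne : j ≠ i := ne_of_mem_erase hj
    rcases lt_or_gt_of_ne hne with h | h
    · rw [hlt i j h, if_pos h, if_neg (not_lt_of_gt h)]; ring
    · rw [hgt i j h, if_pos h, if_neg (not_lt_of_gt h)]; ring
end
end

section
open Finset

section
variable {α : Type*} [DecidableEq α] [Fintype α] (σ : Equiv.Perm α) (a : α)

/-- initial part of the orbit of `a` -/
def Fo (s : ℕ) : Finset α := (range s).image fun t => σ^[t+1] a

theorem mem_Fo {s : ℕ} {z : α} : z ∈ Fo σ a s ↔ ∃ t < s, σ^[t+1] a = z := by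
  simp [Fo]

/-- orbit length -/
noncomputable def ml : ℕ := Function.minimalPeriod σ a

theorem ml_pos : 0 < ml σ a := by
  apply Function.minimalPeriod_pos_of_mem_periodicPts
  refine ⟨orderOf σ, orderOf_pos σ, ?_⟩
  rw [Function.IsPeriodicPt, Function.IsFixedPt, ← Equiv.Perm.coe_pow, pow_orderOf_eq_one]; rfl

theorem iter_ml : σ^[ml σ a] a = a := Function.iterate_minimalPeriod

theorem iter_inj {s t : ℕ} (hs : s < ml σ a) (ht : t < ml σ a) (h : σ^[s] a = σ^[t] a) : s = t :=
  Function.iterate_injOn_Iio_minimalPeriod (Set.mem_Iio.2 hs) (Set.mem_Iio.2 ht) h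

theorem iter_inj' {s t : ℕ} (hs : s < ml σ a) (ht : t < ml σ a) (h : σ^[s+1] a = σ^[t+1] a) : s = t := by
  rw [Function.iterate_succ_apply', Function.iterate_succ_apply'] at h
  exact iter_inj σ a hs ht (σ.injective h)

theorem a_mem_Fo : a ∈ Fo σ a (ml σ a) := by
  rw [mem_Fo]
  have := ml_pos σ a
  refine ⟨ml σ a - 1, by omega, ?_⟩
  rw [Nat.sub_add_cancel this, iter_ml]

theorem a_notMem_Fo {s : ℕ} (hs : s < ml σ a) : a ∉ Fo σ a s := by
  rw [mem_Fo]
  rintro ⟨t, ht, h⟩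
  have := iter_inj σ a (s := t+1) (t := 0) (by omega) (ml_pos σ a) h
  omega

theorem succ_notMem_Fo {s : ℕ} (hs : s < ml σ a) : σ^[s+1] a ∉ Fo σ a s := by
  rw [mem_Fo]
  rintro ⟨t, ht, h⟩
  have := iter_inj' σ a (by omega) hs h
  omega

theorem Fo_succ (s : ℕ) : Fo σ a (s+1) = insert (σ^[s+1] a) (Fo σ a s) := by
  rw [Fo, range_add_one, image_insert]; rfl

theorem Fo_inv (z : α) : σ z ∈ Fo σ a (ml σ a) ↔ z ∈ Fo σ a (ml σ a) := by
  rw [mem_Fo, mem_Fo]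
  have hp := ml_pos σ a
  constructor
  · rintro ⟨t, ht, h⟩
    rw [Function.iterate_succ_apply'] at h
    have h := σ.injective h
    rcases t with _ | t
    · exact ⟨ml σ a - 1, by omega, by rw [Nat.sub_add_cancel hp, iter_ml]; exact h⟩
    · exact ⟨t, by omega, h⟩
  · rintro ⟨t, ht, rfl⟩
    rcases Nat.lt_or_ge (t+1) (ml σ a) with h | h
    · exact ⟨t+1, h, by rw [Function.iterate_succ_apply']⟩
    · have : t + 1 = ml σ a := by omega
      exact ⟨0, hp, by rw [this, iter_ml]; rfl⟩

theorem Fo_swap {s : ℕ} (h1 : 1 ≤ s) (hs : s < ml σ a) (z : α) :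
    σ z ∈ Fo σ a s ↔ Equiv.swap a (σ^[s] a) z ∈ Fo σ a s := by
  by_cases hza : z = a
  · subst hza
    rw [Equiv.swap_apply_left, mem_Fo, mem_Fo]
    refine iff_of_true ⟨0, h1, rfl⟩ ⟨s-1, by omega, by rw [Nat.sub_add_cancel h1]⟩
  by_cases hzb : z = σ^[s] a
  · subst hzb
    rw [Equiv.swap_apply_right, ← Function.iterate_succ_apply' (f := σ)]
    exact iff_of_false (succ_notMem_Fo σ a hs) (a_notMem_Fo σ a hs)
  rw [Equiv.swap_apply_of_ne_of_ne hza hzb, mem_Fo, mem_Fo]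
  constructor
  · rintro ⟨t, ht, h⟩
    rw [Function.iterate_succ_apply'] at h
    have h := σ.injective h
    rcases t with _ | t
    · exact absurd h.symm hza
    · exact ⟨t, by omega, h⟩
  · rintro ⟨t, ht, rfl⟩
    have : t + 1 ≠ s := fun h => hzb (by rw [h])
    exact ⟨t+1, by omega, by rw [Function.iterate_succ_apply']⟩

variable {N : ℕ}

/-- recolouring -/
def rcl (w : α → Fin N) (s : ℕ) (j : Fin N) : α → Fin N := fun z => if z ∈ Fo σ a s then j else w z

theorem rcl_zero (w : α → Fin N) (j : Fin N) : rcl σ a w 0 j = w := by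
  funext z; simp [rcl, Fo]

theorem inv_iter (w : α → Fin N) (hw : w ∘ σ = w) (t : ℕ) : w (σ^[t] a) = w a := by
  induction t with
  | zero => rfl
  | succ t ih => rw [Function.iterate_succ_apply', ← ih]; exact congrFun hw _

theorem inv_Fo (w : α → Fin N) (hw : w ∘ σ = w) {s : ℕ} {z : α} (hz : z ∈ Fo σ a s) : w z = w a := by
  rw [mem_Fo] at hz
  obtain ⟨t, _, rfl⟩ := hz
  exact inv_iter σ a w hw _

theorem rcl_full_inv (w : α → Fin N) (hw : w ∘ σ = w) (j : Fin N) :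
    rcl σ a w (ml σ a) j ∘ σ = rcl σ a w (ml σ a) j := by
  funext z
  have : w (σ z) = w z := congrFun hw z
  simp only [Function.comp, rcl, Fo_inv, this]

theorem rcl_full_a (w : α → Fin N) (j : Fin N) : rcl σ a w (ml σ a) j a = j := by
  simp [rcl, a_mem_Fo]

theorem rcl_full_rcl (w : α → Fin N) (hw : w ∘ σ = w) (j : Fin N) :
    rcl σ a (rcl σ a w (ml σ a) j) (ml σ a) (w a) = w := by
  funext z
  simp only [rcl]
  split_ifs with h
  · exact (inv_Fo σ a w hw h).symm
  · rfl

/-- monomial of a word -/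
noncomputable def mon (w : α → Fin N) : MP N := ∏ z, MvPolynomial.X (w z)

theorem mon_rcl_succ (w : α → Fin N) (hw : w ∘ σ = w) (j : Fin N) {s : ℕ} (hs : s < ml σ a) :
    MvPolynomial.X j * mon (rcl σ a w s j) = MvPolynomial.X (w a) * mon (rcl σ a w (s+1) j) := by
  unfold mon
  rw [← mul_prod_erase univ _ (mem_univ (σ^[s+1] a)), ← mul_prod_erase univ _ (mem_univ (σ^[s+1] a))]
  have e1 : rcl σ a w s j (σ^[s+1] a) = w a := by
    rw [rcl, if_neg (succ_notMem_Fo σ a hs), inv_iter σ a w hw]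
  have e2 : rcl σ a w (s+1) j (σ^[s+1] a) = j := by
    rw [rcl, if_pos (by rw [Fo_succ]; exact mem_insert_self _ _)]
  have e3 : ∏ z ∈ univ.erase (σ^[s+1] a), (MvPolynomial.X (rcl σ a w s j z) : MP N) =
      ∏ z ∈ univ.erase (σ^[s+1] a), MvPolynomial.X (rcl σ a w (s+1) j z) := by
    refine prod_congr rfl fun z hz => ?_
    have := ne_of_mem_erase hz
    simp only [rcl, Fo_succ, mem_insert, this, false_or]
  rw [e1, e2, e3]
  ring

theorem telescope (w : α → Fin N) (hw : w ∘ σ = w) (j : Fin N) :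
    (MvPolynomial.X (w a) - MvPolynomial.X j) * ∑ s ∈ range (ml σ a + 1), mon (rcl σ a w s j) =
      MvPolynomial.X (w a) * mon w - MvPolynomial.X j * mon (rcl σ a w (ml σ a) j) := by
  have key : ∀ n ≤ ml σ a, (MvPolynomial.X (w a) - MvPolynomial.X j) * ∑ s ∈ range n, mon (rcl σ a w s j)
      = MvPolynomial.X (w a) * mon w - MvPolynomial.X (w a) * mon (rcl σ a w n j) := by
    intro n
    induction n with
    | zero => intro _; simp [rcl_zero]
    | succ n ih =>
      intro hn
      rw [sum_range_succ, mul_add, ih (by omega), ← mon_rcl_succ σ a w hw j (by omega)]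
      ring
  rw [sum_range_succ, mul_add, key _ le_rfl]
  ring

/-- invariant words -/
def Iw (N : ℕ) : Finset (α → Fin N) := univ.filter fun w => w ∘ σ = w

/-- invariant words with a second colour -/
def Iwj (N : ℕ) : Finset ((α → Fin N) × Fin N) := univ.filter fun p => p.1 ∘ σ = p.1 ∧ p.2 ≠ p.1 a

theorem sum_Iwj {M : Type*} [AddCommMonoid M] (f : (α → Fin N) → Fin N → M) :
    ∑ p ∈ Iwj σ a N, f p.1 p.2 = ∑ w ∈ Iw σ N, ∑ j ∈ univ.erase (w a), f w j := by
  rw [Iwj, Iw, sum_filter, sum_filter, ← univ_product_univ, sum_product]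
  refine sum_congr rfl fun w _ => ?_
  split_ifs with h
  · simp only [h, true_and, ← sum_filter]
    refine sum_congr ?_ fun _ _ => rfl
    ext; simp
  · simp [h]

theorem Iwj_invol {M : Type*} [AddCommMonoid M] (f : (α → Fin N) → Fin N → M) :
    ∑ p ∈ Iwj σ a N, f (rcl σ a p.1 (ml σ a) p.2) (p.1 a) = ∑ p ∈ Iwj σ a N, f p.1 p.2 := by
  have hm : ∀ p ∈ Iwj σ a N, (rcl σ a p.1 (ml σ a) p.2, p.1 a) ∈ Iwj σ a N := by
    intro p hp
    simp only [Iwj, mem_filter, mem_univ, true_and] at hp ⊢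
    refine ⟨rcl_full_inv σ a _ hp.1 _, ?_⟩
    rw [rcl_full_a]; exact hp.2.symm
  have hi : ∀ p ∈ Iwj σ a N, (rcl σ a (rcl σ a p.1 (ml σ a) p.2) (ml σ a) (p.1 a), rcl σ a p.1 (ml σ a) p.2 a) = p := by
    intro p hp
    simp only [Iwj, mem_filter, mem_univ, true_and] at hp
    rw [rcl_full_a, rcl_full_rcl σ a _ hp.1]
  exact sum_bij' (fun p _ => (rcl σ a p.1 (ml σ a) p.2, p.1 a)) (fun p _ => (rcl σ a p.1 (ml σ a) p.2, p.1 a))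
    hm hm hi hi (fun _ _ => rfl)

/-- twisted words -/
def Bw (N : ℕ) : Finset (α × (α → Fin N)) :=
  univ.filter fun p => p.1 ≠ a ∧ p.2 ∘ σ = p.2 ∘ Equiv.swap a p.1 ∧ p.2 a ≠ p.2 p.1

theorem Bw_struct (b : α) (w : α → Fin N) (hw : w ∘ σ = w ∘ Equiv.swap a b) (hn : w a ≠ w b) :
    ∃ s, 1 ≤ s ∧ s < ml σ a ∧ σ^[s] a = b ∧ (∀ t < s, w (σ^[t+1] a) = w b) ∧
      (∀ t, s ≤ t → t < ml σ a → w (σ^[t+1] a) = w a) := by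
  have h0 : w (σ a) = w b := by
    have := congrFun hw a; simpa using this
  have hb : w (σ b) = w a := by
    have := congrFun hw b; simpa using this
  have hz : ∀ z, z ≠ a → z ≠ b → w (σ z) = w z := by
    intro z h1 h2
    have := congrFun hw z; simpa [Equiv.swap_apply_of_ne_of_ne h1 h2] using this
  have hp := ml_pos σ a
  have hna : ∀ t, t + 1 < ml σ a → σ^[t+1] a ≠ a := by
    intro t ht h
    have := iter_inj σ a (s := t+1) (t := 0) ht hp h
    omega
  have run : ∀ n ≤ ml σ a, (∀ t, 1 ≤ t → t < n → σ^[t] a ≠ b) → ∀ t < n, w (σ^[t+1] a) = w b := by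
    intro n hn hb t
    induction t with
    | zero => intro _; exact h0
    | succ t ih =>
      intro ht
      rw [Function.iterate_succ_apply', hz _ (hna t (by omega)) (hb _ (by omega) ht)]
      exact ih (by omega)
  have ex : ∃ s, 1 ≤ s ∧ s < ml σ a ∧ σ^[s] a = b := by
    by_contra hc
    push Not at hc
    have := run (ml σ a) le_rfl hc (ml σ a - 1) (by omega)
    rw [Nat.sub_add_cancel hp, iter_ml] at this
    exact hn this
  obtain ⟨s, h1, h2, h3⟩ := ex
  have hu : ∀ t, t < ml σ a → σ^[t] a = b → t = s := by
    intro t ht h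
    exact iter_inj σ a ht h2 (h.trans h3.symm)
  refine ⟨s, h1, h2, h3, run s h2.le ?_, ?_⟩
  · intro t _ ht h
    have := hu t (by omega) h
    omega
  · intro t hst
    induction t, hst using Nat.le_induction with
    | base => intro _; rw [Function.iterate_succ_apply', h3, hb]
    | succ t hst ih =>
      intro ht
      rw [Function.iterate_succ_apply', hz _ (hna t ht), ih (by omega)]
      intro h
      have := hu _ ht h
      omega

theorem Bw_sum {M : Type*} [AddCommMonoid M] (f : (α → Fin N) → M) :
    ∑ q ∈ Iwj σ a N ×ˢ Ico 1 (ml σ a), f (rcl σ a q.1.1 q.2 q.1.2) = ∑ p ∈ Bw σ a N, f p.2 := by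
  refine sum_bij (fun q _ => (σ^[q.2] a, rcl σ a q.1.1 q.2 q.1.2)) ?_ ?_ ?_ (fun _ _ => rfl)
  · rintro ⟨⟨w, j⟩, s⟩ hq
    simp only [Iwj, mem_product, mem_filter, mem_univ, true_and, mem_Ico] at hq
    obtain ⟨⟨hw, hj⟩, h1, hs⟩ := hq
    simp only [Bw, mem_filter, mem_univ, true_and]
    have hb : σ^[s] a ∈ Fo σ a s := by
      rw [mem_Fo]; exact ⟨s-1, by omega, by rw [Nat.sub_add_cancel h1]⟩
    refine ⟨?_, ?_, ?_⟩
    · intro h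
      have := iter_inj σ a (t := 0) hs (ml_pos σ a) h
      omega
    · funext z
      simp only [Function.comp, rcl, Fo_swap σ a h1 hs]
      split_ifs with h
      · rfl
      · have e1 : w (σ z) = w z := congrFun hw z
        rw [e1]
        by_cases hza : z = a
        · subst hza; rw [Equiv.swap_apply_left, inv_iter σ z w hw]
        by_cases hzb : z = σ^[s] a
        · subst hzb; rw [Equiv.swap_apply_right, inv_iter σ a w hw]
        rw [Equiv.swap_apply_of_ne_of_ne hza hzb]
    · simp only [rcl, if_pos hb, if_neg (a_notMem_Fo σ a hs)]
      exact hj.symm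
  · rintro ⟨⟨w, j⟩, s⟩ hq ⟨⟨w', j'⟩, s'⟩ hq' h
    simp only [Iwj, mem_product, mem_filter, mem_univ, true_and, mem_Ico] at hq hq'
    obtain ⟨⟨hw, hj⟩, h1, hs⟩ := hq
    obtain ⟨⟨hw', hj'⟩, h1', hs'⟩ := hq'
    simp only [Prod.mk.injEq] at h ⊢
    obtain ⟨ha, hb⟩ := h
    have := iter_inj σ a hs hs' ha
    subst this
    have hbm : σ^[s] a ∈ Fo σ a s := by
      rw [mem_Fo]; exact ⟨s-1, by omega, by rw [Nat.sub_add_cancel h1]⟩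
    have haa : w a = w' a := by
      have := congrFun hb a
      simpa [rcl, a_notMem_Fo σ a hs] using this
    refine ⟨⟨?_, ?_⟩, rfl⟩
    · funext z
      by_cases hz : z ∈ Fo σ a s
      · rw [inv_Fo σ a w hw hz, inv_Fo σ a w' hw' hz, haa]
      · have := congrFun hb z
        simpa [rcl, hz] using this
    · have := congrFun hb (σ^[s] a)
      simpa [rcl, hbm] using this
  · rintro ⟨b, w⟩ hp
    simp only [Bw, mem_filter, mem_univ, true_and] at hp
    obtain ⟨hba, hw, hn⟩ := hp
    obtain ⟨s, h1, hs, hb, c1, c2⟩ := Bw_struct σ a b w hw hn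
    refine ⟨⟨⟨rcl σ a w (ml σ a) (w a), w b⟩, s⟩, ?_, ?_⟩
    · simp only [Iwj, mem_product, mem_filter, mem_univ, true_and, mem_Ico]
      refine ⟨⟨?_, ?_⟩, h1, hs⟩
      · funext z
        simp only [Function.comp, rcl, Fo_inv]
        split_ifs with h
        · rfl
        · have hza : z ≠ a := fun e => h (e ▸ a_mem_Fo σ a)
          have hzb : z ≠ b := by
            rintro rfl
            apply h
            rw [mem_Fo]; exact ⟨s-1, by omega, by rw [Nat.sub_add_cancel h1, hb]⟩
          have := congrFun hw z
          simpa [Equiv.swap_apply_of_ne_of_ne hza hzb] using this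
      · rw [rcl_full_a]; exact hn.symm
    · simp only [Prod.mk.injEq]
      refine ⟨hb, ?_⟩
      funext z
      simp only [rcl]
      split_ifs with hz1 hz2
      · rw [mem_Fo] at hz1
        obtain ⟨t, ht, rfl⟩ := hz1
        exact (c1 t ht).symm
      · rw [mem_Fo] at hz1 hz2
        obtain ⟨t, ht, rfl⟩ := hz2
        exact (c2 t (by by_contra hc; exact hz1 ⟨t, by omega, rfl⟩) ht).symm
      · rfl

/-- the core lemma -/
theorem core_lemma : 2 * ∑ w ∈ Iw σ N, mon w * Dv N (w a) (Vd N) =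
    (2 * ((N : MP N) - 1) * ∑ w ∈ Iw σ N, mon w + ∑ p ∈ Bw σ a N, mon p.2) * Vd N := by
  obtain ⟨U, hU, hA, hD⟩ := exists_Uq N
  have s0 : ∑ w ∈ Iw σ N, mon w * Dv N (w a) (Vd N) =
      ∑ p ∈ Iwj σ a N, MvPolynomial.X (p.1 a) * mon p.1 * U (p.1 a) p.2 := by
    rw [sum_Iwj σ a (fun w j => MvPolynomial.X (w a) * mon w * U (w a) j)]
    refine sum_congr rfl fun w _ => ?_
    rw [hD, mul_sum]
    refine sum_congr rfl fun j _ => ?_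
    ring
  have s1 : ∑ p ∈ Iwj σ a N, MvPolynomial.X (p.1 a) * mon p.1 * U (p.1 a) p.2 =
      - ∑ p ∈ Iwj σ a N, MvPolynomial.X p.2 * mon (rcl σ a p.1 (ml σ a) p.2) * U (p.1 a) p.2 := by
    rw [← Iwj_invol σ a (fun w j => MvPolynomial.X (w a) * mon w * U (w a) j), ← sum_neg_distrib]
    refine sum_congr rfl fun p _ => ?_
    simp only [rcl_full_a]
    rw [hA (p.1 a) p.2]; ring
  have cnt : ∑ p ∈ Iwj σ a N, mon p.1 = ((N : MP N) - 1) * ∑ w ∈ Iw σ N, mon w := by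
    rw [sum_Iwj σ a (fun w _ => mon w), mul_sum]
    refine sum_congr rfl fun w _ => ?_
    rw [sum_const, card_erase_of_mem (mem_univ _), card_univ, Fintype.card_fin, nsmul_eq_mul,
      Nat.cast_sub (Fin.pos (w a))]
    simp
  have cnt2 : ∑ p ∈ Iwj σ a N, mon (rcl σ a p.1 (ml σ a) p.2) = ((N : MP N) - 1) * ∑ w ∈ Iw σ N, mon w := by
    rw [← cnt, ← Iwj_invol σ a (fun w _ => mon w)]
  have s2 : ∑ p ∈ Iwj σ a N, (MvPolynomial.X (p.1 a) * mon p.1 - MvPolynomial.X p.2 * mon (rcl σ a p.1 (ml σ a) p.2)) * U (p.1 a) p.2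
     = (∑ p ∈ Iwj σ a N, ∑ s ∈ range (ml σ a + 1), mon (rcl σ a p.1 s p.2)) * Vd N := by
    rw [sum_mul]
    refine sum_congr rfl fun p hp => ?_
    simp only [Iwj, mem_filter, mem_univ, true_and] at hp
    rw [← telescope σ a p.1 hp.1, ← hU (p.1 a) p.2 hp.2.symm]
    ring
  have s3 : ∑ p ∈ Iwj σ a N, ∑ s ∈ range (ml σ a + 1), mon (rcl σ a p.1 s p.2) =
      2 * ((N : MP N) - 1) * ∑ w ∈ Iw σ N, mon w + ∑ p ∈ Bw σ a N, mon p.2 := by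
    rw [← Bw_sum σ a, sum_product]
    have : ∀ p ∈ Iwj σ a N, ∑ s ∈ range (ml σ a + 1), mon (rcl σ a p.1 s p.2) =
        mon p.1 + mon (rcl σ a p.1 (ml σ a) p.2) + ∑ s ∈ Ico 1 (ml σ a), mon (rcl σ a p.1 s p.2) := by
      intro p _
      rw [sum_range_succ, range_eq_Ico, sum_eq_sum_Ico_succ_bot (ml_pos σ a), rcl_zero]
      ring
    rw [sum_congr rfl this, sum_add_distrib, sum_add_distrib, cnt, cnt2]
    ring
  rw [← s3, ← s2, two_mul]
  conv_lhs => rw [s0]; arg 2; rw [s1]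
  rw [← sub_eq_add_neg, ← sum_sub_distrib]
  refine sum_congr rfl fun p _ => ?_
  ring
end
end

section
open Finset

section
variable {N : ℕ}

/-- monomial with exponent vector `e` -/
noncomputable def mx (e : Fin N → ℕ) : MP N := ∏ j, MvPolynomial.X j ^ e j

theorem mx_mul (e f : Fin N → ℕ) : mx e * mx f = mx (fun j => e j + f j) := by
  simp only [mx, ← prod_mul_distrib, pow_add]

theorem Dv_mx (i : Fin N) (e : Fin N → ℕ) : Dv N i (mx e) = (e i : ℚ) • mx e := by
  unfold mx
  rw [der_prod, sum_eq_single i]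
  · rw [Derivation.leibniz_pow, Dv_X, if_pos rfl, ← mul_prod_erase univ _ (mem_univ i)]
    rcases h : e i with _ | n
    · simp
    · rw [smul_eq_mul, nsmul_eq_mul, Nat.add_sub_cancel, ← pow_succ, Algebra.smul_def]
      simp
      ring
  · intro j _ hj
    rw [Derivation.leibniz_pow, Dv_X, if_neg hj]; simp
  · simp

/-- the operator `∑ (D² - D)` -/
noncomputable def L2 (N : ℕ) : MP N →ₗ[ℚ] MP N :=
  ∑ i, ((Dv N i : MP N →ₗ[ℚ] MP N) ∘ₗ (Dv N i : MP N →ₗ[ℚ] MP N) - (Dv N i : MP N →ₗ[ℚ] MP N))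

theorem L2_apply (f : MP N) : L2 N f = ∑ i, (Dv N i (Dv N i f) - Dv N i f) := by
  simp [L2]

theorem L2_mx (e : Fin N → ℕ) : L2 N (mx e) = (∑ i, ((e i : ℚ)^2 - e i)) • mx e := by
  rw [L2_apply, sum_smul]
  refine sum_congr rfl fun i _ => ?_
  rw [Dv_mx, Derivation.map_smul, Dv_mx, smul_smul, sub_smul, sq]

theorem L2_mul (f g : MP N) : L2 N (f * g) = L2 N f * g + f * L2 N g + 2 * ∑ i, Dv N i f * Dv N i g := by
  simp only [L2_apply, sum_mul, mul_sum, ← sum_add_distrib]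
  refine sum_congr rfl fun i _ => ?_
  simp only [Derivation.leibniz, map_add, smul_eq_mul]
  ring

theorem Vd_sum : Vd N = ∑ π : Equiv.Perm (Fin N), ((Equiv.Perm.sign π : ℤ) : ℚ) • mx (fun i => (π i : ℕ)) := by
  rw [Vd, ← Matrix.det_transpose, Matrix.det_apply]
  refine sum_congr rfl fun π _ => ?_
  simp only [Matrix.transpose_apply, Matrix.vandermonde_apply, mx]
  rw [Units.smul_def, Int.cast_smul_eq_zsmul]

theorem sum_sq_sub (N : ℕ) : ∑ i : Fin N, (((i : ℕ) : ℚ)^2 - (i : ℕ)) = 2 * (N.choose 3 : ℚ) := by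
  induction N with
  | zero => simp
  | succ N ih =>
    rw [Fin.sum_univ_castSucc]
    simp only [Fin.val_castSucc, Fin.val_last]
    rw [ih, Nat.choose_succ_succ' N 2]
    push_cast
    rw [Nat.cast_choose_two]
    ring

theorem L2_Vd : L2 N (Vd N) = (2 * (N.choose 3 : ℚ)) • Vd N := by
  conv_lhs => rw [Vd_sum]
  conv_rhs => rw [Vd_sum]
  rw [map_sum, smul_sum]
  refine sum_congr rfl fun π _ => ?_
  rw [map_smul, L2_mx, Equiv.sum_comp π (fun i : Fin N => (((i : ℕ) : ℚ)^2 - (i : ℕ))), sum_sq_sub, smul_comm]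

variable {α : Type*} [DecidableEq α] [Fintype α]

/-- content of a word -/
def cont (w : α → Fin N) (j : Fin N) : ℕ := #(univ.filter fun z => w z = j)

theorem mon_eq (w : α → Fin N) : mon w = mx (cont w) := by
  unfold mon mx cont
  rw [← prod_fiberwise univ w]
  refine prod_congr rfl fun j _ => ?_
  rw [← prod_const]
  refine prod_congr rfl fun z hz => ?_
  rw [(mem_filter.1 hz).2]

theorem cont_cast (w : α → Fin N) (j : Fin N) : (cont w j : ℚ) = ∑ z, if w z = j then 1 else 0 := by
  simp [cont]

theorem cont_sq (w : α → Fin N) : ∑ j, ((cont w j : ℚ)^2 - cont w j) =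
    ∑ a, ∑ b ∈ univ.erase a, if w a = w b then 1 else 0 := by
  have h1 : ∑ j, (cont w j : ℚ)^2 = ∑ a, ∑ b, if w a = w b then 1 else 0 := by
    simp only [sq, cont_cast, sum_mul_sum]
    rw [sum_comm]
    refine sum_congr rfl fun a _ => ?_
    rw [sum_comm]
    refine sum_congr rfl fun b _ => ?_
    simp [eq_comm]
  have h2 : ∑ j, (cont w j : ℚ) = ∑ a : α, 1 := by
    simp only [cont_cast]
    rw [sum_comm]
    simp
  rw [sum_sub_distrib, h1, h2, ← sum_sub_distrib]
  refine sum_congr rfl fun a _ => ?_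
  rw [← add_sum_erase univ _ (mem_univ a)]
  simp

/-- colouring polynomial of a permutation -/
noncomputable def Pc (N : ℕ) (ρ : Equiv.Perm α) : MP N := ∑ w ∈ Iw ρ N, mon w

theorem Iw_inv (ρ : Equiv.Perm α) : Iw ρ⁻¹ N = Iw ρ N := by
  ext w
  simp only [Iw, mem_filter, mem_univ, true_and]
  constructor
  · intro h
    funext z
    have := congrFun h (ρ z)
    simpa using this.symm
  · intro h
    funext z
    have := congrFun h (ρ⁻¹ z)
    simpa using this.symm

theorem Iw_swap_mul (ρ : Equiv.Perm α) (a b : α) (w : α → Fin N) :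
    w ∈ Iw (Equiv.swap a b * ρ) N ↔ w ∘ ⇑ρ⁻¹ = w ∘ Equiv.swap a b := by
  simp only [Iw, mem_filter, mem_univ, true_and]
  constructor
  · intro h
    funext z
    have := congrFun h (ρ⁻¹ z)
    simpa using this.symm
  · intro h
    funext z
    have := congrFun h (ρ z)
    simpa using this.symm

theorem op_id (ρ : Equiv.Perm α) : L2 N (Vd N * Pc N ρ) =
    (2 * (N.choose 3 : ℚ) + 2 * ((N : ℚ) - 1) * Fintype.card α) • (Vd N * Pc N ρ) +
      Vd N * ∑ a, ∑ b ∈ univ.erase a, Pc N (Equiv.swap a b * ρ) := by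
  have hC : ∀ (c : ℚ) (f : MP N), c • f = MvPolynomial.C c * f := fun c f => MvPolynomial.smul_eq_C_mul f c
  have h1 : ∀ w : α → Fin N, L2 N (Vd N * mon w) = (2 * (N.choose 3 : ℚ)) • (Vd N * mon w) +
      Vd N * (∑ a, ∑ b ∈ univ.erase a, if w a = w b then mon w else 0) + 2 * ∑ a, mon w * Dv N (w a) (Vd N) := by
    intro w
    rw [L2_mul, L2_Vd, mon_eq, L2_mx, cont_sq]
    congr 1
    · rw [smul_mul_assoc]
      congr 2
      rw [sum_smul]
      refine sum_congr rfl fun a _ => ?_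
      rw [sum_smul]
      refine sum_congr rfl fun b _ => ?_
      split_ifs <;> simp
    · congr 1
      simp only [Dv_mx, cont_cast, sum_smul, mul_sum]
      rw [sum_comm]
      refine sum_congr rfl fun a _ => ?_
      rw [sum_eq_single (w a)]
      · simp [mul_comm]
      · intro j _ hj
        simp [hj.symm]
      · simp
  have h2 : L2 N (Vd N * Pc N ρ) = (2 * (N.choose 3 : ℚ)) • (Vd N * Pc N ρ) +
      Vd N * (∑ a, ∑ b ∈ univ.erase a, ∑ w ∈ Iw ρ N, if w a = w b then mon w else 0) +
      ∑ a, 2 * ∑ w ∈ Iw ρ N, mon w * Dv N (w a) (Vd N) := by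
    rw [Pc, mul_sum, map_sum, sum_congr rfl (fun w _ => h1 w), sum_add_distrib, sum_add_distrib, smul_sum]
    congr 1
    · congr 1
      rw [← mul_sum, sum_comm]
      congr 1
      refine sum_congr rfl fun a _ => ?_
      rw [sum_comm]
    · rw [← mul_sum, sum_comm, mul_sum]
  have h3 : ∀ a, 2 * ∑ w ∈ Iw ρ N, mon w * Dv N (w a) (Vd N) = (2 * ((N:ℚ) - 1)) • (Vd N * Pc N ρ) +
      Vd N * ∑ b ∈ univ.erase a, ∑ w ∈ Iw (Equiv.swap a b * ρ) N, if w a ≠ w b then mon w else 0 := by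
    intro a
    rw [← Iw_inv, core_lemma, Iw_inv, add_mul, Pc, hC]
    congr 1
    · have hC2 : (MvPolynomial.C (2:ℚ) : MP N) = 2 := map_ofNat _ 2
      simp [hC2]; ring
    · rw [mul_comm]
      congr 1
      rw [Bw, sum_filter, ← univ_product_univ, sum_product, ← sum_filter_add_sum_filter_not univ (fun b => b ∈ univ.erase a)]
      rw [sum_eq_zero (s := filter (fun b => ¬ b ∈ univ.erase a) univ), add_zero]
      · refine sum_congr (by ext; simp) fun b hb => ?_
        have hb' : b ≠ a := by simpa using hb
        rw [← sum_filter, ← sum_filter]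
        refine sum_congr ?_ fun _ _ => rfl
        ext w
        simp only [mem_filter, mem_univ, true_and, Iw_swap_mul, hb', ne_eq, not_false_eq_true]
      · intro b hb
        have hb' : b = a := by simpa using hb
        simp [hb']
  rw [h2, sum_congr rfl (fun a _ => h3 a), sum_add_distrib, ← mul_sum, sum_const, card_univ]
  have h4 : ∑ a, ∑ b ∈ univ.erase a, Pc N (Equiv.swap a b * ρ) =
      (∑ a, ∑ b ∈ univ.erase a, ∑ w ∈ Iw ρ N, if w a = w b then mon w else 0) +
      ∑ a, ∑ b ∈ univ.erase a, ∑ w ∈ Iw (Equiv.swap a b * ρ) N, if w a ≠ w b then mon w else 0 := by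
    rw [← sum_add_distrib]
    refine sum_congr rfl fun a _ => ?_
    rw [← sum_add_distrib]
    refine sum_congr rfl fun b _ => ?_
    have e : ∑ w ∈ Iw ρ N, (if w a = w b then mon w else 0) =
        ∑ w ∈ Iw (Equiv.swap a b * ρ) N, if w a = w b then mon w else 0 := by
      rw [← sum_filter, ← sum_filter]
      refine sum_congr ?_ fun _ _ => rfl
      ext w
      rw [mem_filter, mem_filter, Iw_swap_mul, ← Iw_inv]
      simp only [Iw, mem_filter, mem_univ, true_and]
      refine and_congr_left fun hab => ?_
      have : w ∘ Equiv.swap a b = w := by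
        funext z
        simp only [Function.comp, Equiv.swap_apply_def]
        split_ifs with h1 h2
        · rw [h1, hab]
        · rw [h2, hab]
        · rfl
      rw [this]
    rw [e, ← sum_add_distrib, Pc]
    refine sum_congr rfl fun w _ => ?_
    split_ifs <;> simp_all
  rw [h4]
  have hC2 : (MvPolynomial.C (2:ℚ) : MP N) = 2 := map_ofNat _ 2
  simp only [hC, nsmul_eq_mul]
  simp [hC2]
  ring
end
end

section
open Finset

section
variable {α : Type*} [DecidableEq α] [Fintype α] {N : ℕ}

theorem swap_eq_pair {a b x y : α} (hab : a ≠ b) (h : Equiv.swap a b = Equiv.swap x y) :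
    (a = x ∧ b = y) ∨ (a = y ∧ b = x) := by
  have h1 : Equiv.swap x y a = b := by rw [← h]; simp
  rw [Equiv.swap_apply_def] at h1
  split_ifs at h1 with h2 h3
  · exact Or.inl ⟨h2, h1.symm⟩
  · exact Or.inr ⟨h3, h1.symm⟩
  · exact absurd h1 hab

theorem sum_swaps {M : Type*} [AddCommMonoid M] (f : Equiv.Perm α → M) :
    ∑ a, ∑ b ∈ univ.erase a, f (Equiv.swap a b) = ∑ τ : Swp α, 2 • f τ.1 := by
  classical
  have h1 : ∑ a, ∑ b ∈ univ.erase a, f (Equiv.swap a b) =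
      ∑ p ∈ (univ : Finset (α × α)).filter (fun p => p.1 ≠ p.2), f (Equiv.swap p.1 p.2) := by
    rw [sum_filter, Fintype.sum_prod_type]
    refine sum_congr rfl fun a _ => ?_
    rw [← sum_filter]
    refine sum_congr ?_ fun _ _ => rfl
    ext b; simp [eq_comm]
  rw [h1, ← sum_subtype (univ.filter fun τ : Equiv.Perm α => τ.IsSwap) (by simp) (fun τ => 2 • f τ),
    ← sum_fiberwise_of_maps_to (t := univ.filter fun τ : Equiv.Perm α => τ.IsSwap)
      (g := fun p : α × α => Equiv.swap p.1 p.2)]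
  · refine sum_congr rfl fun τ hτ => ?_
    simp only [mem_filter, mem_univ, true_and] at hτ
    obtain ⟨x, y, hxy, rfl⟩ := hτ
    have : (univ.filter (fun p : α × α => p.1 ≠ p.2)).filter
        (fun p => Equiv.swap p.1 p.2 = Equiv.swap x y) = {(x,y), (y,x)} := by
      ext ⟨a, b⟩
      simp only [mem_filter, mem_univ, true_and, mem_insert, mem_singleton, Prod.mk.injEq]
      constructor
      · rintro ⟨h, h'⟩; exact swap_eq_pair h h'
      · rintro (⟨rfl, rfl⟩ | ⟨rfl, rfl⟩)
        · exact ⟨hxy, rfl⟩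
        · exact ⟨hxy.symm, Equiv.swap_comm _ _⟩
    rw [this, sum_pair (by simp [hxy]), Equiv.swap_comm y x, two_nsmul]
  · intro p hp
    simp only [mem_filter, mem_univ, true_and] at hp ⊢
    exact ⟨p.1, p.2, hp, rfl⟩

theorem sum_word_succ {X M : Type*} [Fintype X] [AddCommMonoid M] (r : ℕ) (f : List X → M) :
    ∑ v : Fin (r+1) → X, f (List.ofFn v) = ∑ x, ∑ v : Fin r → X, f (x :: List.ofFn v) := by
  rw [← Fintype.sum_prod_type' (f := fun x (v : Fin r → X) => f (x :: List.ofFn v))]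
  rw [← (Fin.consEquiv (fun _ : Fin (r+1) => X)).sum_comp]
  refine sum_congr rfl fun p _ => ?_
  simp [Fin.consEquiv, List.ofFn_cons]

/-- normalized cut-and-join operator -/
noncomputable def Mop (N d : ℕ) : MP N →ₗ[ℚ] MP N :=
  (1/2 : ℚ) • L2 N - ((N.choose 3 : ℚ) + ((N:ℚ)-1) * d) • LinearMap.id

theorem Mop_Pc (ρ : Equiv.Perm α) : Mop N (Fintype.card α) (Vd N * Pc N ρ) =
    Vd N * ∑ τ : Swp α, Pc N (τ.1 * ρ) := by
  have h := sum_swaps (fun τ : Equiv.Perm α => Pc N (τ * ρ))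
  simp only [Mop, LinearMap.sub_apply, LinearMap.smul_apply, LinearMap.id_apply, op_id, h]
  rw [← smul_sum, smul_add, smul_smul, mul_smul_comm, ← Nat.cast_smul_eq_nsmul ℚ, smul_smul]
  norm_num
  rw [add_sub_right_comm, ← sub_smul]
  ring_nf
  simp

theorem Mop_pow (r : ℕ) : (Mop N (Fintype.card α) ^ r) (Vd N * Pc N (1 : Equiv.Perm α)) =
    Vd N * ∑ v : Fin r → Swp α, Pc N (prw (List.ofFn v)) := by
  induction r with
  | zero => simp [prw]
  | succ r ih =>
    rw [pow_succ', Module.End.mul_apply, ih, mul_sum, map_sum,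
      sum_word_succ (f := fun l : List (Swp α) => Pc N (prw l)), sum_comm, mul_sum]
    refine sum_congr rfl fun v _ => ?_
    rw [Mop_Pc]
    simp [prw]

end

/-- the functional -/
noncomputable def Phi (N : ℕ) : MP N →ₗ[ℚ] ℚ :=
  (MvPolynomial.basisMonomials (Fin N) ℚ).constr ℚ (fun e => ∏ i, ((e i : ℕ) : ℚ) ^ (i : ℕ))

theorem Phi_mx {N : ℕ} (e : Fin N → ℕ) : Phi N (mx e) = ∏ i, ((e i : ℕ) : ℚ) ^ (i : ℕ) := by
  have : mx e = MvPolynomial.basisMonomials (Fin N) ℚ (Finsupp.equivFunOnFinite.symm e) := by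
    rw [MvPolynomial.coe_basisMonomials, mx]; show _ = MvPolynomial.monomial _ 1; rw [MvPolynomial.monomial_eq]
    simp [Finsupp.prod_fintype]
  rw [this, Phi, Module.Basis.constr_basis]
  simp

/-- superfactorial -/
noncomputable def Del (N : ℕ) : ℚ := (Matrix.vandermonde (fun i : Fin N => ((i : ℕ) : ℚ))).det

theorem Phi_Vd_mx {N : ℕ} (c : Fin N → ℕ) : Phi N (Vd N * mx c) = Del N := by
  rw [Vd_sum, sum_mul, map_sum, Del,
    Matrix.det_eval_matrixOfPolynomials_eq_det_vandermonde _
      (fun j : Fin N => (Polynomial.X + Polynomial.C (c j : ℚ)) ^ (j : ℕ))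
      (fun j => by rw [Polynomial.natDegree_pow, Polynomial.natDegree_X_add_C, mul_one])
      (fun j => (Polynomial.monic_X_add_C _).pow _),
    Matrix.det_apply]
  refine sum_congr rfl fun π _ => ?_
  rw [smul_mul_assoc, mx_mul, map_smul, Phi_mx, Units.smul_def, ← Int.cast_smul_eq_zsmul ℚ]
  simp

theorem Phi_Pc {α : Type*} [DecidableEq α] [Fintype α] {N : ℕ} (ρ : Equiv.Perm α) :
    Phi N (Vd N * Pc N ρ) = Del N * #(Iw ρ N) := by
  simp only [Pc, mul_sum, map_sum, mon_eq, Phi_Vd_mx, sum_const, nsmul_eq_mul]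
  ring

noncomputable def Gc (N d r : ℕ) : ℚ := Tw (Swp (Fin d)) r (fun l => (#(Iw (prw l) N) : ℚ))

/-- eigenvalue -/
noncomputable def Lam (N d : ℕ) (e : Fin N → ℕ) : ℚ :=
  (1/2) * (∑ i, ((e i : ℚ)^2 - e i)) - ((N.choose 3 : ℚ) + ((N:ℚ)-1) * d)

theorem Mop_mx {N : ℕ} (d r : ℕ) (e : Fin N → ℕ) : (Mop N d ^ r) (mx e) = Lam N d e ^ r • mx e := by
  induction r with
  | zero => simp
  | succ r ih =>
    rw [pow_succ', Module.End.mul_apply, ih, map_smul, Mop]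
    simp only [LinearMap.sub_apply, LinearMap.smul_apply, LinearMap.id_apply, L2_mx]
    rw [smul_smul, ← sub_smul, smul_smul, Lam, pow_succ]

theorem Pc_one (N d : ℕ) : Pc N (1 : Equiv.Perm (Fin d)) =
    ∑ k ∈ piAntidiag (univ : Finset (Fin N)) d, (Nat.multinomial univ k : ℚ) • mx k := by
  have h1 : Pc N (1 : Equiv.Perm (Fin d)) = (∑ j : Fin N, (MvPolynomial.X j : MP N)) ^ d := by
    have := Finset.prod_univ_sum (fun _ : Fin d => (univ : Finset (Fin N)))
      (fun _ j => (MvPolynomial.X j : MP N))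
    simp only [prod_const, card_univ, Fintype.card_fin] at this
    rw [this, Pc]
    refine sum_congr ?_ fun _ _ => rfl
    ext w; simp [Iw]
  rw [h1, sum_pow_eq_sum_piAntidiag]
  refine sum_congr rfl fun k _ => ?_
  rw [mx, Nat.cast_smul_eq_nsmul, nsmul_eq_mul]

theorem Gc_formula (N d r : ℕ) : Del N * Gc N d r =
    ∑ π : Equiv.Perm (Fin N), ((Equiv.Perm.sign π : ℤ) : ℚ) *
      ∑ k ∈ piAntidiag (univ : Finset (Fin N)) d, (Nat.multinomial univ k : ℚ) *
        (Lam N d (fun i => (π i : ℕ) + k i) ^ r * ∏ i, (((π i : ℕ) + k i : ℕ) : ℚ) ^ (i : ℕ)) := by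
  have h := congrArg (Phi N) (Mop_pow (α := Fin d) (N := N) r)
  rw [mul_sum, map_sum] at h
  simp only [Phi_Pc, Fintype.card_fin] at h
  rw [← mul_sum] at h
  unfold Gc Tw
  rw [← h, Vd_sum, Pc_one, sum_mul, map_sum, map_sum]
  refine sum_congr rfl fun π _ => ?_
  rw [smul_mul_assoc, map_smul, map_smul, smul_eq_mul, mul_sum, map_sum, map_sum]
  congr 1
  refine sum_congr rfl fun k _ => ?_
  rw [mul_smul_comm, map_smul, map_smul, mx_mul, Mop_mx, map_smul, Phi_mx]
  simp only [smul_eq_mul]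
end

section
open Finset
open scoped PowerSeries

section
variable {R : Type*} [CommRing R]

noncomputable def hh (a : ℕ → R) (m : ℕ) : R⟦X⟧ := PowerSeries.mk fun n => (n : R)^m * a n

theorem theta_hh (a : ℕ → R) (m : ℕ) : theta R (hh a m) = hh a (m+1) := by
  ext n; simp only [coeff_theta, hh, PowerSeries.coeff_mk]; ring

noncomputable def Mb (a : ℕ → R) (N : ℕ) : Matrix (Fin N) (Fin N) R⟦X⟧ :=
  Matrix.of fun p s => PowerSeries.mk fun c =>
    ((c + p : ℕ) : R)^(s:ℕ) * (((c + p : ℕ).descFactorial p : R) * a (c + p))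

theorem sum_fin_choose (N : ℕ) : ∑ p : Fin N, (p : ℕ) = N.choose 2 := by
  rw [Fin.sum_univ_eq_sum_range (fun i => i), sum_range_id, Nat.choose_two_right]

theorem hankel_det [IsDomain R] (a : ℕ → R) (N : ℕ) :
    hk (hh a) N = PowerSeries.X ^ (N.choose 2) * (Mb a N).det := by
  have h1 := Matrix.det_mul_column (fun p : Fin N => (PowerSeries.X : R⟦X⟧) ^ (p:ℕ)) (Mb a N)
  rw [prod_pow_eq_pow_sum, sum_fin_choose] at h1
  rw [← h1]
  let T : Matrix (Fin N) (Fin N) R := Matrix.of fun i j => (descPochhammer R j).coeff i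
  have hT : T.det = 1 := Matrix.det_matrixOfPolynomials (fun j : Fin N => descPochhammer R j)
    (fun j => descPochhammer_natDegree R j) (fun j => monic_descPochhammer R j)
  have hT' : ((PowerSeries.C (R := R)).mapMatrix T).transpose.det = 1 := by
    rw [Matrix.det_transpose, ← RingHom.map_det, hT, map_one]
  have : hk (hh a) N = (((PowerSeries.C (R := R)).mapMatrix T).transpose *
      (Matrix.of fun i j : Fin N => hh a (i+j))).det := by
    rw [Matrix.det_mul, hT', one_mul, hk]
  rw [this]
  congr 1
  ext p s n
  simp only [Matrix.mul_apply, Matrix.transpose_apply, RingHom.mapMatrix_apply, Matrix.map_apply,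
    Matrix.of_apply, T, map_sum, PowerSeries.coeff_C_mul, hh, PowerSeries.coeff_mk, Mb,
    PowerSeries.coeff_X_pow_mul']
  have h2 : ∀ q : Fin N, (descPochhammer R (p:ℕ)).coeff q * ((n:R)^((q:ℕ)+(s:ℕ)) * a n) =
      ((descPochhammer R (p:ℕ)).coeff q * (n:R)^(q:ℕ)) * ((n:R)^(s:ℕ) * a n) := by
    intro q; ring
  simp_rw [h2]
  rw [← sum_mul, Fin.sum_univ_eq_sum_range (fun q => (descPochhammer R (p:ℕ)).coeff q * (n:R)^q),
    ← Polynomial.eval_eq_sum_range' (by rw [descPochhammer_natDegree]; exact p.2),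
    descPochhammer_eval_eq_descFactorial]
  split_ifs with h
  · rw [Nat.sub_add_cancel h]; ring
  · rw [Nat.descFactorial_of_lt (by omega)]; simp

theorem toda_form (k : ℕ) (γ ε : R) (z : R⟦X⟧) (τ : R⟦X⟧)
    (h : τ = PowerSeries.X ^ k * (PowerSeries.C γ * PowerSeries.rescale ε z)) :
    τ * theta R (theta R τ) - theta R τ ^ 2 = PowerSeries.X ^ (2*k) * (PowerSeries.C (γ^2) *
      PowerSeries.rescale ε (z * theta R (theta R z) - theta R z ^ 2)) := by
  have hX : theta R ((PowerSeries.X : R⟦X⟧)^k) = (k : R⟦X⟧) * PowerSeries.X^k := by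
    ext n
    have hk : (k : R⟦X⟧) = PowerSeries.C (k : R) := by simp
    rw [coeff_theta, hk, PowerSeries.coeff_C_mul, PowerSeries.coeff_X_pow]
    split_ifs with h
    · rw [h]
    · simp
  have hC : theta R (PowerSeries.C γ) = 0 := by
    ext n
    rw [coeff_theta, PowerSeries.coeff_C]
    split_ifs with h
    · simp [h]
    · simp
  have hN : theta R (k : R⟦X⟧) = 0 := by
    ext n
    have hk : (k : R⟦X⟧) = PowerSeries.C (k : R) := by simp
    rw [coeff_theta, hk, PowerSeries.coeff_C]
    split_ifs with h
    · simp [h]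
    · simp
  have e1 : theta R τ = PowerSeries.X ^ k * (PowerSeries.C γ *
      ((k : R⟦X⟧) * PowerSeries.rescale ε z + PowerSeries.rescale ε (theta R z))) := by
    rw [h, theta_mul, theta_mul, hX, hC, theta_rescale]; ring
  have e2 : theta R (theta R τ) = PowerSeries.X ^ k * (PowerSeries.C γ *
      ((k : R⟦X⟧)^2 * PowerSeries.rescale ε z + 2 * (k : R⟦X⟧) * PowerSeries.rescale ε (theta R z) +
        PowerSeries.rescale ε (theta R (theta R z)))) := by
    rw [e1, theta_mul, theta_mul, map_add, theta_mul, hX, hC, hN, theta_rescale, theta_rescale]; ring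
  rw [e2, e1, h]
  simp only [map_sub, map_mul, map_pow]
  ring

theorem toda_generic [IsDomain R] (a : ℕ → R) (γ ε : ℕ → R) (z : ℕ → R⟦X⟧)
    (hγ : ∀ n, γ n ≠ 0) (hz : ∀ n, z n ≠ 0) (hε : ∀ n, IsUnit (ε n))
    (h : ∀ n, (Mb a n).det = PowerSeries.C (γ n) * PowerSeries.rescale (ε n) (z n)) (n d : ℕ) :
    γ (n+2) * γ n * ∑ p ∈ antidiagonal d, ((ε (n+2)^p.1 * ε n ^p.2) *
        (PowerSeries.coeff p.1 (z (n+2)) * PowerSeries.coeff p.2 (z n))) =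
      γ (n+1)^2 * (ε (n+1)^(d+1) * ∑ p ∈ antidiagonal (d+1), ((p.1:R)^2 - p.1*p.2) *
        (PowerSeries.coeff p.1 (z (n+1)) * PowerSeries.coeff p.2 (z (n+1)))) := by
  have hτ : ∀ m, hk (hh a) m = PowerSeries.X ^ (m.choose 2) *
      (PowerSeries.C (γ m) * PowerSeries.rescale (ε m) (z m)) := fun m => by rw [hankel_det, h]
  have h0 : hk (hh a) n ≠ 0 := by
    rw [hτ]
    refine mul_ne_zero (pow_ne_zero _ PowerSeries.X_ne_zero) (mul_ne_zero ?_ ?_)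
    · intro hc
      apply hγ n
      have := congrArg (PowerSeries.coeff 0) hc
      simpa using this
    · intro hc
      apply hz n
      ext m
      have := congrArg (PowerSeries.coeff m) hc
      rw [PowerSeries.coeff_rescale, map_zero] at this
      rw [map_zero]
      exact (mul_eq_zero.1 this).resolve_left (pow_ne_zero _ (hε n).ne_zero)
  have ht := toda_hankel (theta R) (hh a) (theta_hh a) n h0
  rw [toda_form _ _ _ _ _ (hτ (n+1)), hτ, hτ] at ht
  have hk1 : (n+2).choose 2 + n.choose 2 = 2 * (n+1).choose 2 + 1 := by
    have e1 := Nat.choose_succ_succ' (n+1) 1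
    have e2 := Nat.choose_succ_succ' n 1
    simp only [Nat.choose_one_right, Nat.reduceAdd] at e1 e2
    have e3 : (n+2).choose 2 = (n+1+1).choose 2 := rfl
    rw [e3]
    omega
  have ht2 : PowerSeries.X ^ (2 * (n+1).choose 2) * (PowerSeries.X * (PowerSeries.C (γ (n+2) * γ n) *
      (PowerSeries.rescale (ε (n+2)) (z (n+2)) * PowerSeries.rescale (ε n) (z n)))) =
      PowerSeries.X ^ (2 * (n+1).choose 2) * (PowerSeries.C (γ (n+1)^2) *
      PowerSeries.rescale (ε (n+1)) (z (n+1) * theta R (theta R (z (n+1))) - theta R (z (n+1)) ^ 2)) := by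
    rw [← ht, ← mul_assoc, ← pow_succ, ← hk1, pow_add, map_mul]; ring
  have ht3 := mul_left_cancel₀ (pow_ne_zero _ PowerSeries.X_ne_zero) ht2
  have ht4 := congrArg (PowerSeries.coeff (d+1)) ht3
  rw [PowerSeries.coeff_succ_X_mul, PowerSeries.coeff_C_mul, PowerSeries.coeff_mul,
    PowerSeries.coeff_C_mul, PowerSeries.coeff_rescale, map_sub, PowerSeries.coeff_mul,
    sq (theta R (z (n+1))), PowerSeries.coeff_mul, ← sum_sub_distrib] at ht4
  simp only [PowerSeries.coeff_rescale, coeff_theta] at ht4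
  have hs := Finset.Nat.sum_antidiagonal_swap (n := d+1) (f := fun p : ℕ × ℕ => ((p.1:R)^2 - p.1*p.2) *
        (PowerSeries.coeff p.1 (z (n+1)) * PowerSeries.coeff p.2 (z (n+1))))
  rw [← hs]
  refine Eq.trans ?_ (ht4.trans ?_)
  · congr 1
    refine sum_congr rfl fun p _ => ?_
    ring
  · congr 2
    refine sum_congr rfl fun p _ => ?_
    simp only [Prod.fst_swap, Prod.snd_swap]
    ring
end
end

section
open Finset
open scoped PowerSeries

noncomputable def ZN (N d : ℕ) : ℚ⟦X⟧ :=
  PowerSeries.mk fun r => Gc N d r / (r.factorial * d.factorial)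

theorem Ex_sum {ι : Type*} (s : Finset ι) (f : ι → ℚ) : Ex (∑ i ∈ s, f i) = ∏ i ∈ s, Ex (f i) := by
  classical
  induction s using Finset.induction_on with
  | empty => simp [Ex_zero]
  | insert a s ha ih => rw [sum_insert ha, prod_insert ha, Ex_add, ih]

noncomputable def av (n : ℕ) : ℚ⟦X⟧ := PowerSeries.C ((n.factorial : ℚ)⁻¹) * Ex (((n:ℚ)^2 - n)/2)

theorem desc_av (c p : ℕ) : (((c + p).descFactorial p : ℕ) : ℚ⟦X⟧) * av (c + p) =
    PowerSeries.C ((c.factorial : ℚ)⁻¹) * Ex ((((c+p:ℕ):ℚ)^2 - (c+p:ℕ))/2) := by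
  have h := Nat.factorial_mul_descFactorial (Nat.le_add_left p c)
  rw [Nat.add_sub_cancel] at h
  rw [av, ← map_natCast (PowerSeries.C (R := ℚ)), ← mul_assoc, ← map_mul, ← h]
  congr 2
  push_cast
  have h1 : (c.factorial : ℚ) ≠ 0 := by positivity
  have h2 : ((c + p).descFactorial p : ℚ) ≠ 0 := by
    rw [Nat.cast_ne_zero, Ne, Nat.descFactorial_eq_zero_iff_lt]; omega
  field_simp

theorem ZN_formula (N d : ℕ) : PowerSeries.C (Del N) * ZN N d =
    ∑ π : Equiv.Perm (Fin N), PowerSeries.C ((Equiv.Perm.sign π : ℤ) : ℚ) *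
      ∑ k ∈ piAntidiag (univ : Finset (Fin N)) d,
        PowerSeries.C ((Nat.multinomial univ k : ℚ) / d.factorial *
          ∏ i, (((π i : ℕ) + k i : ℕ) : ℚ) ^ (i : ℕ)) * Ex (Lam N d (fun i => (π i : ℕ) + k i)) := by
  ext r
  rw [PowerSeries.coeff_C_mul, ZN, PowerSeries.coeff_mk, mul_div_assoc', Gc_formula, sum_div, map_sum]
  refine sum_congr rfl fun π _ => ?_
  rw [PowerSeries.coeff_C_mul, mul_div_assoc, sum_div, map_sum]
  congr 1
  refine sum_congr rfl fun k _ => ?_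
  rw [PowerSeries.coeff_C_mul, coeff_Ex]
  have h1 : (d.factorial : ℚ) ≠ 0 := by positivity
  have h2 : (r.factorial : ℚ) ≠ 0 := by positivity
  field_simp

theorem sum_anti {ι M : Type*} [Fintype ι] [DecidableEq ι] [AddCommMonoid M] (d : ℕ) (f : (ι → ℕ) → M) :
    ∑ l ∈ finsuppAntidiag (univ : Finset ι) d, f l = ∑ k ∈ piAntidiag (univ : Finset ι) d, f k := by
  refine sum_bij (fun l _ => l) ?_ ?_ ?_ ?_
  · intro l hl; simpa [mem_finsuppAntidiag, mem_piAntidiag] using hl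
  · intro a _ b _ h; exact DFunLike.coe_injective h
  · intro k hk
    refine ⟨Finsupp.equivFunOnFinite.symm k, ?_, by simp⟩
    simpa [mem_finsuppAntidiag, mem_piAntidiag] using hk
  · intro _ _; rfl

theorem det_Mb (N : ℕ) : (Mb av N).det = PowerSeries.C (PowerSeries.C (Del N) * Ex (N.choose 3)) *
    PowerSeries.rescale (Ex ((N:ℚ)-1)) (PowerSeries.mk (ZN N)) := by
  refine PowerSeries.ext fun d => ?_
  rw [PowerSeries.coeff_C_mul, PowerSeries.coeff_rescale, PowerSeries.coeff_mk]
  have : PowerSeries.C (Del N) * Ex (N.choose 3) * (Ex ((N:ℚ)-1)^d * ZN N d) =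
    Ex (N.choose 3 + ((N:ℚ)-1)*d) * (PowerSeries.C (Del N) * ZN N d) := by
    rw [Ex_pow, Ex_add, mul_comm (d:ℚ)]; ring
  rw [this, ZN_formula, Matrix.det_apply, map_sum, mul_sum]
  refine sum_congr rfl fun π _ => ?_
  rw [Units.smul_def, map_zsmul, PowerSeries.coeff_prod, zsmul_eq_mul, map_intCast, mul_left_comm]
  congr 1
  rw [mul_sum, sum_anti d (fun k => ∏ i, PowerSeries.coeff (k i) (Mb av N (π i) i))]
  refine sum_congr rfl fun k hk => ?_
  simp only [Mb, Matrix.of_apply, PowerSeries.coeff_mk, desc_av]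
  rw [prod_mul_distrib, prod_mul_distrib, ← Ex_sum, mul_left_comm (Ex _), ← Ex_add, ← mul_assoc]
  have hL : (N.choose 3 : ℚ) + ((N:ℚ)-1)*d + Lam N d (fun i => (π i : ℕ) + k i) =
      ∑ i, ((((k i+π i:ℕ):ℚ)^2 - (k i+π i:ℕ))/2) := by
    rw [Lam, ← sum_div]
    simp only [add_comm (k _)]
    ring
  rw [hL]
  congr 1
  rw [← map_prod]
  simp only [← map_natCast (PowerSeries.C (R := ℚ)), ← map_pow]
  rw [← map_prod, ← map_mul]
  congr 1
  have hm := Nat.multinomial_spec univ k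
  rw [(mem_piAntidiag.1 hk).1] at hm
  rw [mul_comm, ← hm]
  simp only [add_comm (k _)]
  congr 1
  push_cast
  rw [prod_inv_distrib]
  have h1 : ∏ i, ((k i).factorial : ℚ) ≠ 0 := prod_ne_zero_iff.2 fun i _ => by positivity
  have h2 : (Nat.multinomial univ k : ℚ) ≠ 0 := by
    have := Nat.multinomial_pos univ k
    positivity
  field_simp

theorem Iw_zero_card (N : ℕ) (ρ : Equiv.Perm (Fin 0)) : #(Iw ρ N) = 1 := by
  rw [card_eq_one]
  refine ⟨Fin.elim0, ?_⟩
  ext w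
  simp only [Iw, mem_filter, mem_univ, true_and, mem_singleton]
  exact ⟨fun _ => Subsingleton.elim _ _, fun _ => Subsingleton.elim _ _⟩

theorem ZN_zero_ne (N : ℕ) : ZN N 0 ≠ 0 := by
  intro h
  have := congrArg (PowerSeries.coeff 0) h
  simp [ZN, Gc, Tw_zero, Iw_zero_card] at this

theorem Del_succ (n : ℕ) : Del (n+1) = n.superFactorial := by
  unfold Del
  exact Matrix.det_vandermonde_id_eq_superFactorial n

theorem Del_zero : Del 0 = 1 := by simp [Del]

theorem Del_ne (n : ℕ) : Del n ≠ 0 := by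
  rcases n with _ | n
  · simp [Del_zero]
  · rw [Del_succ, Nat.cast_ne_zero]
    induction n with
    | zero => simp
    | succ n ih => rw [Nat.superFactorial_succ]; exact mul_ne_zero (Nat.factorial_ne_zero _) ih

theorem Del_rel (n : ℕ) : Del (n+2) * Del n = (n+1) * Del (n+1)^2 := by
  rcases n with _ | n
  · simp [Del_succ, Del_zero]
  · rw [Del_succ, Del_succ, Del_succ, Nat.superFactorial_succ, Nat.superFactorial_succ,
      Nat.factorial_succ (n+1)]
    push_cast
    ring

theorem Ex_ne (c : ℚ) : IsUnit (Ex c) := by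
  refine IsUnit.of_mul_eq_one (Ex (-c)) ?_
  rw [← Ex_add, add_neg_cancel, Ex_zero]

theorem toda_ZN (n d : ℕ) :
    ((n:ℚ⟦X⟧) + 1) * ∑ p ∈ antidiagonal d, Ex ((p.1:ℚ) - p.2) * (ZN (n+2) p.1 * ZN n p.2) =
      ∑ p ∈ antidiagonal (d+1), ((p.1:ℚ⟦X⟧)^2 - p.1*p.2) * (ZN (n+1) p.1 * ZN (n+1) p.2) := by
  have hC : ∀ n, PowerSeries.C (Del n) ≠ 0 := by
    intro n h
    have := congrArg (PowerSeries.coeff 0) h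
    simp [Del_ne] at this
  have h := toda_generic av (fun N => PowerSeries.C (Del N) * Ex (N.choose 3))
    (fun N => Ex ((N:ℚ)-1)) (fun N => PowerSeries.mk (ZN N))
    (fun N => mul_ne_zero (hC N) (Ex_ne _).ne_zero)
    (fun N h => ZN_zero_ne N (by
      have := congrArg (PowerSeries.coeff 0) h
      rwa [PowerSeries.coeff_mk, map_zero] at this))
    (fun N => Ex_ne _) det_Mb n d
  simp only [PowerSeries.coeff_mk] at h
  have h3 : ((n+2).choose 3 : ℚ) + (n.choose 3) = 2 * ((n+1).choose 3) + n := by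
    have e1 := Nat.choose_succ_succ' (n+1) 2
    have e2 := Nat.choose_succ_succ' n 2
    have e3 := Nat.choose_succ_succ' n 1
    simp only [Nat.choose_one_right, Nat.reduceAdd] at e1 e2 e3
    have e4 : (n+2).choose 3 = (n+1+1).choose 3 := rfl
    rw [e4]
    have : (n+1+1).choose 3 + n.choose 3 = 2 * (n+1).choose 3 + n := by omega
    exact_mod_cast this
  have hR : (PowerSeries.C (Del (n+1)) * Ex ((n+1).choose 3))^2 * (Ex (((n+1:ℕ):ℚ)-1)^(d+1)) =
      PowerSeries.C (Del (n+1))^2 * Ex (2 * ((n+1).choose 3) + n + n * d) := by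
    rw [mul_pow, Ex_pow, Ex_pow, mul_assoc, ← Ex_add]
    congr 2
    push_cast; ring
  have hL : PowerSeries.C (Del (n+2)) * Ex ((n+2).choose 3) * (PowerSeries.C (Del n) * Ex (n.choose 3)) *
      ∑ p ∈ antidiagonal d, (Ex (((n+2:ℕ):ℚ)-1)^p.1 * Ex ((n:ℚ)-1)^p.2) * (ZN (n+2) p.1 * ZN n p.2) =
      PowerSeries.C (Del (n+1))^2 * Ex (2 * ((n+1).choose 3) + n + n * d) *
      (((n:ℚ⟦X⟧) + 1) * ∑ p ∈ antidiagonal d, Ex ((p.1:ℚ) - p.2) * (ZN (n+2) p.1 * ZN n p.2)) := by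
    have e1 : PowerSeries.C (Del (n+2)) * PowerSeries.C (Del n) = ((n:ℚ⟦X⟧)+1) * PowerSeries.C (Del (n+1))^2 := by
      rw [← map_mul, Del_rel]; simp
    have e2 : PowerSeries.C (Del (n+2)) * Ex ((n+2).choose 3) * (PowerSeries.C (Del n) * Ex (n.choose 3)) =
        ((n:ℚ⟦X⟧)+1) * PowerSeries.C (Del (n+1))^2 * Ex (2 * ((n+1).choose 3) + n) := by
      rw [← h3, Ex_add, ← e1]; ring
    rw [e2, Ex_add (2 * _ + _)]
    have e3 : ∀ p ∈ antidiagonal d, (Ex (((n+2:ℕ):ℚ)-1)^p.1 * Ex ((n:ℚ)-1)^p.2) * (ZN (n+2) p.1 * ZN n p.2)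
        = Ex (n*d) * (Ex ((p.1:ℚ) - p.2) * (ZN (n+2) p.1 * ZN n p.2)) := by
      intro p hp
      rw [← mul_assoc (Ex (n*d)), ← Ex_add, Ex_pow, Ex_pow, ← Ex_add]
      congr 2
      rw [← mem_antidiagonal.1 hp]
      push_cast; ring
    rw [sum_congr rfl e3, ← mul_sum]
    ring
  rw [hL, ← mul_assoc (_^2) (Ex _ ^ _), hR] at h
  exact mul_left_cancel₀ (mul_ne_zero (pow_ne_zero _ (hC _)) (Ex_ne _).ne_zero) h
end

section
open Finset
open scoped PowerSeries

section
variable {α : Type*} [DecidableEq α] [Fintype α]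

/-- number of orbits -/
noncomputable def orb (ρ : Equiv.Perm α) : ℕ := Nat.card (Quot fun x y => ρ x = y)

theorem Iw_card (ρ : Equiv.Perm α) (N : ℕ) : #(Iw ρ N) = N ^ orb ρ := by
  classical
  have e : {w : α → Fin N // w ∘ ρ = w} ≃ (Quot (fun x y => ρ x = y) → Fin N) :=
    { toFun := fun w => Quot.lift w.1 (fun x y h => by
        rw [← h]; exact (congrFun w.2 x).symm)
      invFun := fun f => ⟨fun x => f (Quot.mk _ x), by
        funext x
        exact congrArg f (Quot.sound (r := fun x y => ρ x = y) rfl).symm⟩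
      left_inv := fun w => rfl
      right_inv := fun f => by
        funext q
        induction q using Quot.ind
        rfl }
  have h := Nat.card_congr e
  rw [Nat.card_fun, Nat.card_eq_fintype_card, Nat.card_eq_fintype_card, Fintype.card_fin,
    Fintype.card_subtype] at h
  exact h

theorem orb_le (ρ : Equiv.Perm α) : orb ρ ≤ Fintype.card α := by
  rw [← Nat.card_eq_fintype_card]
  exact Nat.card_le_card_of_surjective (Quot.mk _) Quot.mk_surjective

theorem orb_eq_iff (ρ : Equiv.Perm α) : orb ρ = Fintype.card α ↔ ρ = 1 := by
  constructor
  · intro h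
    have hb : Function.Bijective (Quot.mk (fun x y => ρ x = y)) :=
      (Nat.bijective_iff_surjective_and_card _).2 ⟨Quot.mk_surjective, by
        rw [Nat.card_eq_fintype_card]; exact h.symm⟩
    ext x
    exact (hb.1 (Quot.sound rfl)).symm
  · rintro rfl
    rw [← Nat.card_eq_fintype_card]
    refine (Nat.card_congr (Equiv.ofBijective (Quot.mk _) ⟨?_, Quot.mk_surjective⟩)).symm
    intro x y h
    exact congrArg (Quot.lift (fun z : α => z) (fun a b h => h)) h
end

noncomputable def PZc (d j : ℕ) : ℚ⟦X⟧ := PowerSeries.mk fun r =>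
  Tw (Swp (Fin d)) r (fun l => if orb (prw l) = j then 1 else 0) / (r.factorial * d.factorial)

noncomputable def PZ (d : ℕ) : Polynomial ℚ⟦X⟧ :=
  ∑ j ∈ range (d+1), Polynomial.C (PZc d j) * Polynomial.X ^ j

theorem PZ_eval (N d : ℕ) : (PZ d).eval (N : ℚ⟦X⟧) = ZN N d := by
  rw [PZ, Polynomial.eval_finsetSum]
  simp only [Polynomial.eval_mul, Polynomial.eval_C, Polynomial.eval_pow, Polynomial.eval_X]
  ext r
  simp only [map_sum, ← Nat.cast_pow]
  simp only [← map_natCast (PowerSeries.C (R := ℚ)), PowerSeries.coeff_mul_C, PZc, ZN,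
    PowerSeries.coeff_mk, Gc, Tw]
  simp only [div_mul_eq_mul_div, ← sum_div, sum_mul]
  rw [sum_comm]
  congr 1
  refine sum_congr rfl fun v _ => ?_
  rw [Iw_card]
  have hm : orb (prw (List.ofFn v)) ∈ range (d+1) := by
    have := orb_le (prw (List.ofFn v))
    rw [Fintype.card_fin] at this
    rw [mem_range]; omega
  rw [sum_eq_single_of_mem _ hm (fun j _ hj => by rw [if_neg hj.symm, zero_mul]), if_pos rfl, one_mul]

theorem PZ_deg (d : ℕ) : (PZ d).natDegree ≤ d := by
  refine Polynomial.natDegree_sum_le_of_forall_le _ _ fun j hj => ?_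
  refine (Polynomial.natDegree_C_mul_X_pow_le _ _).trans ?_
  rw [mem_range] at hj; omega

theorem PZ_coeff (d : ℕ) : (PZ d).coeff d = Zs d := by
  rw [PZ, Polynomial.finsetSum_coeff]
  simp only [Polynomial.coeff_C_mul_X_pow]
  rw [sum_ite_eq, if_pos (by simp), PZc, Zs]
  congr 1
  funext r
  congr 1
  unfold Acount
  refine Tw_congr r fun l => ?_
  rw [IA]
  have := orb_eq_iff (prw l)
  rw [Fintype.card_fin] at this
  exact ite_iff this

theorem taylor_top {R : Type*} [CommRing R] (f : Polynomial R) (c : R) (d : ℕ) (h : f.natDegree ≤ d) :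
    (Polynomial.taylor c f).natDegree ≤ d ∧ (Polynomial.taylor c f).coeff d = f.coeff d := by
  refine ⟨by rwa [Polynomial.natDegree_taylor], ?_⟩
  rcases h.eq_or_lt with h | h
  · rw [← h]
    exact Polynomial.coeff_taylor_natDegree _ _
  · rw [Polynomial.coeff_eq_zero_of_natDegree_lt h,
      Polynomial.coeff_eq_zero_of_natDegree_lt (by rwa [Polynomial.natDegree_taylor])]

theorem toda_Zs (d : ℕ) :
    ∑ p ∈ antidiagonal (d+1), ((p.1 : ℚ⟦X⟧)^2 - p.1 * p.2) * (Zs p.1 * Zs p.2)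
      = ∑ p ∈ antidiagonal d, Ex ((p.1 : ℚ) - p.2) * (Zs p.1 * Zs p.2) := by
  have key : Polynomial.X * ∑ p ∈ antidiagonal d, Polynomial.C (Ex ((p.1:ℚ) - p.2)) *
      (Polynomial.taylor 1 (PZ p.1) * Polynomial.taylor (-1) (PZ p.2)) =
      ∑ p ∈ antidiagonal (d+1), Polynomial.C ((p.1 : ℚ⟦X⟧)^2 - p.1 * p.2) * (PZ p.1 * PZ p.2) := by
    apply Polynomial.eq_of_infinite_eval_eq
    have hinj : Function.Injective (fun n : ℕ => ((n + 1 : ℕ) : ℚ⟦X⟧)) := by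
      intro a b h
      have h' := congrArg (PowerSeries.coeff 0) h
      simp only [← map_natCast (PowerSeries.C (R := ℚ)), PowerSeries.coeff_zero_C] at h'
      have := Nat.cast_injective h'
      omega
    refine (Set.infinite_range_of_injective hinj).mono ?_
    rintro _ ⟨n, rfl⟩
    have e1 : ((n + 1 : ℕ) : ℚ⟦X⟧) + 1 = ((n+2 : ℕ) : ℚ⟦X⟧) := by push_cast; ring
    have e2 : ((n + 1 : ℕ) : ℚ⟦X⟧) + -1 = (n : ℚ⟦X⟧) := by push_cast; ring
    simp only [Set.mem_ofPred_eq, Polynomial.eval_mul, Polynomial.eval_X, Polynomial.eval_finsetSum,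
      Polynomial.eval_C, Polynomial.taylor_eval, e1, e2, PZ_eval]
    rw [← toda_ZN, Nat.cast_add, Nat.cast_one]
  have h := congrArg (fun f => Polynomial.coeff f (d+1)) key
  simp only [Polynomial.coeff_X_mul, Polynomial.finsetSum_coeff, Polynomial.coeff_C_mul] at h
  refine Eq.trans ?_ (h.symm.trans ?_)
  · refine sum_congr rfl fun p hp => ?_
    rw [← mem_antidiagonal.1 hp, Polynomial.coeff_mul_add_eq_of_natDegree_le (PZ_deg _) (PZ_deg _),
      PZ_coeff, PZ_coeff]
  · refine sum_congr rfl fun p hp => ?_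
    have t1 := taylor_top (PZ p.1) 1 p.1 (PZ_deg _)
    have t2 := taylor_top (PZ p.2) (-1) p.2 (PZ_deg _)
    rw [← mem_antidiagonal.1 hp, Polynomial.coeff_mul_add_eq_of_natDegree_le t1.1 t2.1,
      t1.2, t2.2, PZ_coeff, PZ_coeff]

theorem Zs_zero : Zs 0 = 1 := by
  ext r
  rw [Zs, PowerSeries.coeff_mk, PowerSeries.coeff_one, Acount]
  rcases r with _ | r
  · simp [Tw_zero, IA, prw]
  · have : IsEmpty (Swp (Fin 0)) := ⟨fun τ => by obtain ⟨x, _⟩ := τ.2; exact x.elim0⟩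
    rw [Tw_succ]; simp
end

section
open scoped PowerSeries in
theorem hur_coeff (i : ℕ) : ((hurwitzTupleCount i (2 * 0 + 2 * i - 2) : ℚ) / (Nat.factorial i : ℚ)) =
    ((2*i-2).factorial : ℚ) * PowerSeries.coeff (2*i-2) (Ws i) := by
  rw [Ws, PowerSeries.coeff_mk, mul_zero, zero_add]
  have : ((2*i-2).factorial : ℚ) ≠ 0 := by positivity
  field_simp
end

/-- The genus `0` recursion for the Hurwitz numbers:
`H_{0,d} = ((2d-3)/d) ⬝ ∑_{i=1}^{d-1} C(2d-4, 2i-2) i² (d-i)² H_{0,i} H_{0,d-i}`. -/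
theorem genus_zero_hurwitz_recursion (d : ℕ) (hd : 2 ≤ d) :
    hurwitzNumber 0 d =
      ((2 * (d : ℚ) - 3) / (d : ℚ)) *
        ∑ i ∈ Finset.Icc 1 (d - 1),
          (Nat.choose (2 * d - 4) (2 * i - 2) : ℚ) * (i : ℚ) ^ 2 * ((d - i : ℕ) : ℚ) ^ 2 *
            hurwitzNumber 0 i * hurwitzNumber 0 (d - i) := by
  have hrec := rec_leading Ws (toda_to_rec Zs Ws Zs_zero exp_formula toda_Zs) d hd
  have hH : ∀ i, hurwitzNumber 0 i = ((2*i-2).factorial : ℚ) * PowerSeries.coeff (2*i-2) (Ws i) :=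
    fun i => hur_coeff i
  have hs : ∑ i ∈ Finset.Icc 1 (d - 1),
          (Nat.choose (2 * d - 4) (2 * i - 2) : ℚ) * (i : ℚ) ^ 2 * ((d - i : ℕ) : ℚ) ^ 2 *
            hurwitzNumber 0 i * hurwitzNumber 0 (d - i) =
      ((2*d-4).factorial : ℚ) * (2 * ((d:ℚ)-1) * d * PowerSeries.coeff (2*d-2) (Ws d)) := by
    rw [hrec, Finset.mul_sum]
    refine Finset.sum_congr rfl fun i hi => ?_
    rw [Finset.mem_Icc] at hi
    rw [hH, hH]
    have hc := Nat.choose_mul_factorial_mul_factorial (n := 2*d-4) (k := 2*i-2) (by omega)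
    have hx : 2*d-4-(2*i-2) = 2*(d-i)-2 := by omega
    rw [hx] at hc
    rw [← hc]
    push_cast
    ring
  rw [hs, hH]
  obtain ⟨e, rfl⟩ : ∃ e, d = e + 2 := ⟨d - 2, by omega⟩
  have h1 : 2*(e+2)-2 = 2*e+1+1 := by omega
  have h2 : 2*(e+2)-4 = 2*e := by omega
  have h3 : ((2*e+1+1).factorial : ℚ) = (2*(e:ℚ)+2) * ((2*e+1) * (2*e).factorial) := by
    rw [Nat.factorial_succ, Nat.factorial_succ]; push_cast; ring
  rw [h2, h1, h3]
  have h4 : ((e + 2 : ℕ) : ℚ) ≠ 0 := by positivity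
  field_simp
  push_cast
  ring
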